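/- arXiv:math/0412463 — 5 statements merged into one kernel-verified Lean document; each statement's English description precedes it below -/
import Mathlib

section
/- The third cumulant of η = Φ(h + σz) is nonnegative: E[η³] - 3E[η²]E[η] + 2(E[η])³ ≥ 0. -/
/-!
Write `X` for `Φ (h + σ z)` minus its mean. Layer cake expresses `E[X]` and `E[X ^ 3]` as the
integrals over `t > 0` of the signed tail `P(X > t) - P(X < -t)` against the weights `1` and
`3 t ^ 2`. The first integral vanishes, so it suffices that the signed tail changes sign only once,
from negative to positive: an increasing weight then favours the positive part.

For the sign change, say `σ = 1`. As `Φ` is even and convex, `X < -t` and `X > t` read `|h + z| < a`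
and `|h + z| > b`, where raising `t` shrinks `a` at least as fast as it enlarges `b`. Suppose that
`a' < a` and `b' > b` are the radii at a higher level. If `a' + b' ≤ 2 |h|`, then `z ↦ -z` maps
`|h + z| < a'` into `|h + z| > b'`. Otherwise, on either side of `-h`, the reflection exchanging
radii `a'` and `b'` sends the outer shell `b < |h + z| ≤ b'` into the inner shell
`a' ≤ |h + z| < a`, closer to the origin, so the inner shell is the heavier of the two and the
inequality between the tails persists.
-/

open MeasureTheory ProbabilityTheory Real
open Set Filter
open scoped ENNReal NNReal

section SingleCrossing

lemma setIntegral_mul_nonneg_of_single_crossing {α : Type*} [LinearOrder α] [MeasurableSpace α]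
    {ν : Measure α} {s : Set α} {w D : α → ℝ} (hs : MeasurableSet s) (hw : MonotoneOn w s)
    (hD : IntegrableOn D s ν) (hwD : IntegrableOn (fun t => w t * D t) s ν)
    (hD0 : ∫ t in s, D t ∂ν = 0)
    (hcross : ∀ a ∈ s, ∀ b ∈ s, a < b → 0 < D a → 0 ≤ D b) :
    0 ≤ ∫ t in s, w t * D t ∂ν := by
  have of_ae_zero (h : D =ᵐ[ν.restrict s] 0) : 0 ≤ ∫ t in s, w t * D t ∂ν :=
    (integral_eq_zero_of_ae (h.mono fun t ht => by simp [ht])).ge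
  rcases (s ∩ {t | D t < 0}).eq_empty_or_nonempty with hneg | hneg
  · have hD_nonneg : ∀ t ∈ s, 0 ≤ D t := fun t ht =>
      not_lt.1 fun h => (hneg ▸ notMem_empty t) ⟨ht, h⟩
    exact of_ae_zero <|
      (setIntegral_eq_zero_iff_of_nonneg_ae (ae_restrict_of_forall_mem hs hD_nonneg) hD).1 hD0
  rcases (s ∩ {t | 0 < D t}).eq_empty_or_nonempty with hpos | hpos
  · have hD_nonpos : ∀ t ∈ s, 0 ≤ -D t := fun t ht =>
      neg_nonneg.2 <| not_lt.1 fun h => (hpos ▸ notMem_empty t) ⟨ht, h⟩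
    refine of_ae_zero ?_
    have := (setIntegral_eq_zero_iff_of_nonneg_ae (ae_restrict_of_forall_mem hs hD_nonpos)
      hD.neg).1 (by simp [integral_neg, hD0])
    exact this.mono fun t ht => neg_eq_zero.1 ht
  obtain ⟨c, hc_neg, hc_pos⟩ := exists_between_of_forall_le (hneg.image w) (hpos.image w) <| by
    rintro _ ⟨a, ⟨ha, hDa⟩, rfl⟩ _ ⟨b, ⟨hb, hDb⟩, rfl⟩
    exact hw ha hb <| not_lt.1 fun hba => (hcross b hb a ha hba hDb).not_gt hDa
  have h_nonneg : ∀ t ∈ s, 0 ≤ (w t - c) * D t := by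
    intro t ht
    rcases lt_trichotomy (D t) 0 with h | h | h
    · exact mul_nonneg_of_nonpos_of_nonpos
        (sub_nonpos.2 (hc_neg (mem_image_of_mem w ⟨ht, h⟩))) h.le
    · simp [h]
    · exact mul_nonneg (sub_nonneg.2 (hc_pos (mem_image_of_mem w ⟨ht, h⟩))) h.le
  calc 0 ≤ ∫ t in s, (w t - c) * D t ∂ν := setIntegral_nonneg hs h_nonneg
    _ = ∫ t in s, w t * D t ∂ν := by
      simp_rw [sub_mul]
      rw [integral_sub hwD (hD.const_mul c), integral_const_mul, hD0, mul_zero, sub_zero]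

end SingleCrossing

section Tails

variable {Ω : Type*} [MeasurableSpace Ω] {μ : Measure Ω} {f X : Ω → ℝ}

lemma max_zero_pow_sub_max_neg_zero_pow {n : ℕ} (hn : Odd n) (x : ℝ) :
    max x 0 ^ n - max (-x) 0 ^ n = x ^ n := by
  rcases le_total x 0 with hx | hx
  · simp [max_eq_right hx, max_eq_left (neg_nonneg.2 hx), hn.neg_pow, hn.pos.ne']
  · simp [max_eq_left hx, max_eq_right (neg_nonpos.2 hx), hn.pos.ne']

lemma memLp_iff_integrable_pow (hf : AEStronglyMeasurable f μ) {n : ℕ} (hn : n ≠ 0) :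
    MemLp f n μ ↔ Integrable (fun ω => f ω ^ n) μ := by
  rw [← integrable_norm_rpow_iff hf (by exact_mod_cast hn) (ENNReal.natCast_ne_top n),
    ← integrable_norm_iff (f := fun ω => f ω ^ n) (hf.pow n)]
  simp

lemma ae_nonneg_pow_mul_measureReal_lt (n : ℕ) :
    0 ≤ᵐ[volume.restrict (Ioi 0)] fun t : ℝ => (n + 1) * t ^ n * μ.real {ω | t < f ω} :=
  ae_restrict_of_forall_mem measurableSet_Ioi fun t (ht : 0 < t) => by positivity

/-- The signed tail `P(X > t) - P(X < -t)`, which for `t > 0` compares how much mass `X` puts far to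
the right and far to the left. -/
noncomputable def tailGap (μ : Measure Ω) (X : Ω → ℝ) (t : ℝ) : ℝ :=
  μ.real {ω | t < X ω} - μ.real {ω | X ω < -t}

lemma tailGap_eq_measureReal_lt_max_sub {t : ℝ} (ht : 0 < t) :
    tailGap μ X t = μ.real {ω | t < max (X ω) 0} - μ.real {ω | t < max (-X ω) 0} := by
  simp [tailGap, ht.not_gt, lt_neg]

lemma tailGap_sub_const (m t : ℝ) :
    tailGap μ (fun ω => X ω - m) t = μ.real {ω | m + t < X ω} - μ.real {ω | X ω < m - t} := by
  simp only [tailGap, lt_sub_iff_add_lt', sub_lt_iff_lt_add', ← sub_eq_add_neg]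

variable [IsFiniteMeasure μ]

lemma lintegral_pow_succ_eq_lintegral_measureReal_lt (hf0 : 0 ≤ᵐ[μ] f) (hf : AEMeasurable f μ)
    (n : ℕ) :
    ∫⁻ ω, ENNReal.ofReal (f ω ^ (n + 1)) ∂μ
      = ∫⁻ t in Ioi 0, ENNReal.ofReal ((n + 1) * t ^ n * μ.real {ω | t < f ω}) := by
  have hweight : Continuous fun t : ℝ => (n + 1) * t ^ n := by fun_prop
  have hweight_nonneg : ∀ t ∈ Ioi (0 : ℝ), 0 ≤ (n + 1) * t ^ n :=
    fun t (ht : 0 < t) => by positivity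
  have hprimitive (y : ℝ) : ∫ t in (0 : ℝ)..y, (n + 1) * t ^ n = y ^ (n + 1) := by
    rw [intervalIntegral.integral_const_mul, integral_pow]
    field_simp
    simp
  have hcake := lintegral_comp_eq_lintegral_meas_lt_mul μ hf0 hf
    (fun t _ => hweight.intervalIntegrable 0 t)
    (ae_restrict_of_forall_mem measurableSet_Ioi hweight_nonneg)
  simp only [hprimitive] at hcake
  rw [hcake]
  refine setLIntegral_congr_fun measurableSet_Ioi fun t ht => ?_
  rw [ENNReal.ofReal_mul (hweight_nonneg t ht), ofReal_measureReal, mul_comm]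

lemma measurable_pow_mul_measureReal_lt (n : ℕ) :
    Measurable fun t : ℝ => (n + 1) * t ^ n * μ.real {ω | t < f ω} :=
  (by fun_prop : Measurable fun t : ℝ => (n + 1) * t ^ n).mul <|
    Antitone.measurable fun _ _ hst => measureReal_mono fun _ h => lt_of_le_of_lt hst h

lemma integrableOn_pow_mul_measureReal_lt (hf0 : 0 ≤ᵐ[μ] f) {n : ℕ}
    (hf : MemLp f (n + 1 : ℕ) μ) :
    IntegrableOn (fun t => (n + 1) * t ^ n * μ.real {ω | t < f ω}) (Ioi 0) := by
  refine (lintegral_ofReal_ne_top_iff_integrable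
    (measurable_pow_mul_measureReal_lt n).aestronglyMeasurable
    (ae_nonneg_pow_mul_measureReal_lt n)).1 ?_
  rw [← lintegral_pow_succ_eq_lintegral_measureReal_lt hf0 hf.1.aemeasurable]
  exact ((memLp_iff_integrable_pow hf.1 n.succ_ne_zero).1 hf).lintegral_lt_top.ne

lemma integral_pow_succ_eq_integral_measureReal_lt (hf0 : 0 ≤ᵐ[μ] f) (hf : AEMeasurable f μ)
    (n : ℕ) :
    ∫ ω, f ω ^ (n + 1) ∂μ = ∫ t in Ioi 0, (n + 1) * t ^ n * μ.real {ω | t < f ω} := by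
  rw [integral_eq_lintegral_of_nonneg_ae (hf0.mono fun ω h => pow_nonneg h _)
      (hf.pow_const _).aestronglyMeasurable,
    integral_eq_lintegral_of_nonneg_ae (ae_nonneg_pow_mul_measureReal_lt n)
      (measurable_pow_mul_measureReal_lt n).aestronglyMeasurable,
    lintegral_pow_succ_eq_lintegral_measureReal_lt hf0 hf]

lemma integrableOn_pow_mul_tailGap {n : ℕ} (hX : MemLp X (n + 1 : ℕ) μ) :
    IntegrableOn (fun t => (n + 1) * t ^ n * tailGap μ X t) (Ioi 0) := by
  have hpos := integrableOn_pow_mul_measureReal_lt (ae_of_all μ fun ω => le_max_right (X ω) 0)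
    hX.pos_part
  have hneg := integrableOn_pow_mul_measureReal_lt (ae_of_all μ fun ω => le_max_right (-X ω) 0)
    hX.neg_part
  refine (hpos.sub hneg).congr_fun (fun t ht => ?_) measurableSet_Ioi
  simp [tailGap_eq_measureReal_lt_max_sub ht, mul_sub]

lemma integral_pow_succ_eq_integral_tailGap {n : ℕ} (hn : Even n) (hX : MemLp X (n + 1 : ℕ) μ) :
    ∫ ω, X ω ^ (n + 1) ∂μ = ∫ t in Ioi 0, (n + 1) * t ^ n * tailGap μ X t := by
  have hpos0 : 0 ≤ᵐ[μ] fun ω => max (X ω) 0 := ae_of_all μ fun ω => le_max_right (X ω) 0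
  have hneg0 : 0 ≤ᵐ[μ] fun ω => max (-X ω) 0 := ae_of_all μ fun ω => le_max_right (-X ω) 0
  calc ∫ ω, X ω ^ (n + 1) ∂μ
      = ∫ ω, (max (X ω) 0 ^ (n + 1) - max (-X ω) 0 ^ (n + 1)) ∂μ := by
        simp_rw [max_zero_pow_sub_max_neg_zero_pow hn.add_one]
    _ = ∫ ω, max (X ω) 0 ^ (n + 1) ∂μ - ∫ ω, max (-X ω) 0 ^ (n + 1) ∂μ :=
        integral_sub ((memLp_iff_integrable_pow hX.pos_part.1 n.succ_ne_zero).1 hX.pos_part)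
          ((memLp_iff_integrable_pow hX.neg_part.1 n.succ_ne_zero).1 hX.neg_part)
    _ = ∫ t in Ioi 0, ((n + 1) * t ^ n * μ.real {ω | t < max (X ω) 0}
          - (n + 1) * t ^ n * μ.real {ω | t < max (-X ω) 0}) := by
        rw [integral_pow_succ_eq_integral_measureReal_lt hpos0 hX.pos_part.1.aemeasurable,
          integral_pow_succ_eq_integral_measureReal_lt hneg0 hX.neg_part.1.aemeasurable,
          integral_sub (integrableOn_pow_mul_measureReal_lt hpos0 hX.pos_part)
            (integrableOn_pow_mul_measureReal_lt hneg0 hX.neg_part)]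
    _ = ∫ t in Ioi 0, (n + 1) * t ^ n * tailGap μ X t :=
        setIntegral_congr_fun measurableSet_Ioi fun t ht => by
          simp [tailGap_eq_measureReal_lt_max_sub ht, mul_sub]

theorem integral_odd_pow_nonneg_of_tailGap_crossing {n : ℕ} (hn : Odd n) (hX : MemLp X n μ)
    (hmean : ∫ ω, X ω ∂μ = 0)
    (hcross : ∀ s t, 0 < s → s < t → 0 < tailGap μ X s → 0 ≤ tailGap μ X t) :
    0 ≤ ∫ ω, X ω ^ n ∂μ := by
  obtain ⟨k, rfl⟩ := hn
  have hX1 : MemLp X (0 + 1 : ℕ) μ := hX.mono_exponent (by simp)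
  have hmono : MonotoneOn (fun t : ℝ => ((2 * k : ℕ) + 1) * t ^ (2 * k)) (Ioi 0) :=
    fun a (ha : 0 < a) b _ hab =>
      mul_le_mul_of_nonneg_left (pow_le_pow_left₀ ha.le hab _) (by positivity)
  have hgap := integrableOn_pow_mul_tailGap hX1
  have hgap0 := integral_pow_succ_eq_integral_tailGap Even.zero hX1
  rw [integral_pow_succ_eq_integral_tailGap (even_two_mul k) hX]
  refine setIntegral_mul_nonneg_of_single_crossing measurableSet_Ioi hmono (by simpa using hgap)
    (integrableOn_pow_mul_tailGap hX) (by simpa [hmean] using hgap0.symm) ?_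
  exact fun s hs t _ hst hgap_pos => hcross s t hs hst hgap_pos

end Tails

section Convex

variable {Φ : ℝ → ℝ}

lemma sub_le_sub_of_convexOn_of_sub_eq_sub {s : Set ℝ} (hΦ : ConvexOn ℝ s Φ) {a' a b b' : ℝ}
    (ha's : a' ∈ s) (hb's : b' ∈ s) (ha : a' < a) (hab : a < b) (hb : b < b')
    (hlt : Φ a' < Φ a) (heq : Φ b' - Φ b = Φ a - Φ a') : b' - b ≤ a - a' := by
  have has : a ∈ s := hΦ.1.ordConnected.out ha's hb's ⟨ha.le, (hab.trans hb).le⟩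
  have hbs : b ∈ s := hΦ.1.ordConnected.out ha's hb's ⟨(ha.trans hab).le, hb.le⟩
  have hslope : (Φ a - Φ a') / (a - a') ≤ (Φ a - Φ a') / (b' - b) :=
    heq ▸ (hΦ.slope_mono_adjacent ha's hbs ha hab).trans (hΦ.slope_mono_adjacent has hb's hab hb)
  exact (div_le_div_iff_of_pos_left (sub_pos.2 hlt) (sub_pos.2 ha) (sub_pos.2 hb)).1 hslope

lemma tendsto_atTop_of_convexOn_of_lt (hΦ : ConvexOn ℝ univ Φ) {x y : ℝ} (hxy : x < y)
    (hlt : Φ x < Φ y) : Tendsto Φ atTop atTop := by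
  have hslope : 0 < (Φ y - Φ x) / (y - x) := div_pos (sub_pos.2 hlt) (sub_pos.2 hxy)
  refine tendsto_atTop_mono' atTop (f₁ := fun z => Φ y + (Φ y - Φ x) / (y - x) * (z - y)) ?_ <|
    tendsto_atTop_add_const_left _ _ <|
      (tendsto_atTop_add_const_right _ _ tendsto_id).const_mul_atTop hslope
  filter_upwards [eventually_gt_atTop y] with z hyz
  have hchord := hΦ.slope_mono_adjacent (mem_univ x) (mem_univ z) hxy hyz
  rw [le_div_iff₀ (sub_pos.2 hyz)] at hchord
  linarith

lemma apply_abs_of_even (heven : Φ.Even) (x : ℝ) : Φ |x| = Φ x := by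
  rcases abs_choice x with h | h <;> simp [h, heven x]

lemma le_of_convexOn_of_even_of_abs_le (hΦ : ConvexOn ℝ univ Φ) (heven : Φ.Even) {x y : ℝ}
    (hxy : |x| ≤ |y|) : Φ x ≤ Φ y := by
  have hx : x ∈ segment ℝ (-|y|) |y| := by
    rw [segment_eq_Icc (neg_le_self (abs_nonneg y))]
    exact abs_le.1 hxy
  simpa [heven |y|, apply_abs_of_even heven] using hΦ.le_on_segment (mem_univ _) (mem_univ _) hx

lemma lt_of_convexOn_of_even_of_abs_lt (hΦ : ConvexOn ℝ univ Φ) (heven : Φ.Even) {x y : ℝ}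
    (hxy : |x| < |y|) (hy : Φ 0 < Φ y) : Φ x < Φ y := by
  rcases le_or_gt (Φ x) (Φ 0) with hx | hx
  · exact hx.trans_lt hy
  rw [← apply_abs_of_even heven x] at hx ⊢
  rw [← apply_abs_of_even heven y]
  have hx0 : 0 < |x| := (abs_nonneg x).lt_of_ne fun h => hx.ne (by rw [← h])
  refine hΦ.lt_right_of_left_lt (mem_univ 0) (mem_univ |y|) ?_ hx
  rw [openSegment_eq_Ioo (hx0.trans hxy)]
  exact ⟨hx0, hxy⟩

lemma lt_iff_abs_lt_of_convexOn_of_even (hΦ : ConvexOn ℝ univ Φ) (heven : Φ.Even) {x y : ℝ}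
    (hxy : Φ 0 < Φ x ∨ Φ 0 < Φ y) : Φ x < Φ y ↔ |x| < |y| := by
  refine ⟨fun h => not_le.1 fun hyx => (le_of_convexOn_of_even_of_abs_le hΦ heven hyx).not_gt h,
    fun h => lt_of_convexOn_of_even_of_abs_lt hΦ heven h ?_⟩
  exact hxy.elim (fun hx => hx.trans_le (le_of_convexOn_of_even_of_abs_le hΦ heven h.le)) id

lemma exists_nonneg_apply_eq_of_convexOn_of_even (hΦ : ConvexOn ℝ univ Φ) (heven : Φ.Even)
    {x l : ℝ} (hx : Φ 0 < Φ x) (hl : Φ 0 ≤ l) : ∃ r, 0 ≤ r ∧ Φ r = l := by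
  rw [← apply_abs_of_even heven x] at hx
  have hx0 : 0 < |x| := (abs_nonneg x).lt_of_ne fun h => hx.ne (by rw [← h])
  have hcont : ContinuousOn Φ (Ici 0) := (hΦ.continuousOn isOpen_univ).mono (subset_univ _)
  exact intermediate_value_Ici hcont (tendsto_atTop_of_convexOn_of_lt hΦ hx0 hx) hl

end Convex

section Unimodal

/-- A symmetric unimodal law on the line, described by how it reacts to reflections `x ↦ d - x`:
a set does not lose mass when a reflection brings each of its points closer to the origin. -/
def IsSymmUnimodal (μ : Measure ℝ) : Prop :=
  ∀ ⦃s : Set ℝ⦄, MeasurableSet s → ∀ d, (∀ x ∈ s, |d - x| ≤ |x|) → μ s ≤ μ ((d - ·) ⁻¹' s)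

lemma isSymmUnimodal_withDensity {f : ℝ → ℝ≥0∞} (hf : ∀ x y, |x| ≤ |y| → f y ≤ f x) :
    IsSymmUnimodal (volume.withDensity f) := by
  intro s hs d hd
  have hreflect : MeasurePreserving (d - · : ℝ → ℝ) := Measure.measurePreserving_sub_left volume d
  rw [withDensity_apply _ hs, withDensity_apply _ (hreflect.measurable hs)]
  calc ∫⁻ x in s, f x ≤ ∫⁻ x in s, f (d - x) :=
        setLIntegral_mono' hs fun x hx => hf _ _ (hd x hx)
    _ = ∫⁻ x in (d - ·) ⁻¹' s, f x := by
        have := hreflect.setLIntegral_comp_preimage_emb (Homeomorph.subLeft d).measurableEmbedding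
          (fun x => f (d - x)) s
        simpa using this.symm

lemma isSymmUnimodal_gaussianReal {v : ℝ≥0} (hv : v ≠ 0) : IsSymmUnimodal (gaussianReal 0 v) := by
  rw [gaussianReal_of_var_ne_zero 0 hv]
  refine isSymmUnimodal_withDensity fun x y hxy => ?_
  have hsq : x ^ 2 ≤ y ^ 2 := sq_le_sq.2 hxy
  simp only [gaussianPDF, gaussianPDFReal, sub_zero]
  gcongr

variable {μ : Measure ℝ} {c a a' b b' : ℝ}

lemma measure_neg_of_isSymmUnimodal (hμ : IsSymmUnimodal μ) {s : Set ℝ} (hs : MeasurableSet s) :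
    μ (Neg.neg ⁻¹' s) = μ s := by
  refine le_antisymm ?_ (by simpa using hμ hs 0 (by simp))
  simpa [← preimage_comp] using hμ (measurable_neg hs) 0 (by simp)

lemma measure_abs_add_mem_eq_add (hμ : IsSymmUnimodal μ) {s : Set ℝ} (hs : MeasurableSet s)
    (hs0 : s ⊆ Ioi 0) (c : ℝ) :
    μ {x | |c + x| ∈ s} = μ {x | c + x ∈ s} + μ {x | -c + x ∈ s} := by
  have hmeas (d : ℝ) : MeasurableSet {x | d + x ∈ s} := measurable_const_add d hs
  have hunion : {x | |c + x| ∈ s} = {x | c + x ∈ s} ∪ Neg.neg ⁻¹' {x | -c + x ∈ s} := by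
    ext x
    simp only [mem_union, mem_preimage, mem_ofPred_eq, ← neg_add]
    rcases abs_cases (c + x) with ⟨habs, hx⟩ | ⟨habs, hx⟩
    · have hnotMem : -(c + x) ∉ s := fun hs => (neg_nonpos.2 hx).not_gt (hs0 hs)
      rw [habs, or_iff_left hnotMem]
    · have hnotMem : c + x ∉ s := fun hs => hx.not_gt (hs0 hs)
      rw [habs, or_iff_right hnotMem]
  have hdisj : Disjoint {x | c + x ∈ s} (Neg.neg ⁻¹' {x | -c + x ∈ s}) := by
    rw [Set.disjoint_left]
    intro x hpos hneg
    have hpos' : 0 < c + x := hs0 hpos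
    have hneg' : 0 < -c + -x := hs0 hneg
    linarith
  rw [hunion, measure_union hdisj (measurable_neg (hmeas _)),
    measure_neg_of_isSymmUnimodal hμ (hmeas _)]

lemma measure_add_mem_Ioc_le (hμ : IsSymmUnimodal μ) (hc : 2 * c ≤ a' + b') (hb : a' + b' ≤ 2 * b)
    (hgap : b' - b ≤ a - a') : μ {x | c + x ∈ Ioc b b'} ≤ μ {x | c + x ∈ Ico a' a} := by
  refine (hμ (measurable_const_add c measurableSet_Ioc) (a' + b' - 2 * c) ?_).trans
    (measure_mono ?_)
  · rintro x ⟨hbx, -⟩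
    rw [abs_of_nonneg (show 0 ≤ x by linarith), abs_le]
    constructor <;> linarith
  · rintro x ⟨hbx, hxb⟩
    constructor <;> linarith

lemma measure_abs_add_mem_Ioc_le (hμ : IsSymmUnimodal μ) (ha' : 0 < a') (hb0 : 0 < b)
    (hc : 2 * |c| ≤ a' + b') (hb : a' + b' ≤ 2 * b) (hgap : b' - b ≤ a - a') :
    μ {x | |c + x| ∈ Ioc b b'} ≤ μ {x | |c + x| ∈ Ico a' a} := by
  rw [measure_abs_add_mem_eq_add hμ measurableSet_Ioc fun x hx => hb0.trans hx.1,
    measure_abs_add_mem_eq_add hμ measurableSet_Ico fun x hx => ha'.trans_le hx.1]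
  exact add_le_add (measure_add_mem_Ioc_le hμ (by linarith [le_abs_self c]) hb hgap)
    (measure_add_mem_Ioc_le hμ (by linarith [neg_le_abs c]) hb hgap)

lemma measure_abs_add_lt_le_measure_lt_abs_add (hμ : IsSymmUnimodal μ) (hc : a' + b' ≤ 2 * |c|) :
    μ {x | |c + x| < a'} ≤ μ {x | b' < |c + x|} := by
  refine (hμ (measurableSet_lt (by fun_prop) (by fun_prop)) 0 (by simp)).trans (measure_mono ?_)
  intro x (hx : |c + (0 - x)| < a')
  have : 2 * |c| ≤ |c + x| + |c + (0 - x)| := by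
    calc 2 * |c| = |(c + x) + (c + (0 - x))| := by
          rw [show c + x + (c + (0 - x)) = 2 * c by ring, abs_mul, abs_two]
      _ ≤ _ := abs_add_le _ _
  change b' < |c + x|
  linarith

lemma measureReal_abs_add_lt_le_of_gap_le [IsFiniteMeasure μ] (hμ : IsSymmUnimodal μ)
    (ha' : 0 < a') (ha : a' ≤ a) (hab : a ≤ b) (hb : b ≤ b') (hgap : b' - b ≤ a - a')
    (h : μ.real {x | |c + x| < a} ≤ μ.real {x | b < |c + x|}) :
    μ.real {x | |c + x| < a'} ≤ μ.real {x | b' < |c + x|} := by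
  rcases le_total (a' + b') (2 * |c|) with hc | hc
  · exact ENNReal.toReal_mono (measure_ne_top _ _) (measure_abs_add_lt_le_measure_lt_abs_add hμ hc)
  have hmeas {s : Set ℝ} (hs : MeasurableSet s) : MeasurableSet {x | |c + x| ∈ s} :=
    (by fun_prop : Measurable fun x => |c + x|) hs
  have hball : μ.real {x | |c + x| < a}
      = μ.real {x | |c + x| < a'} + μ.real {x | |c + x| ∈ Ico a' a} := by
    rw [← measureReal_union _ (hmeas measurableSet_Ico)]
    · congr 1
      ext x
      simp only [mem_union, mem_ofPred_eq, mem_Ico]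
      grind
    · exact Set.disjoint_left.2 fun x hx hx' => hx'.1.not_gt hx
  have hout : μ.real {x | b < |c + x|}
      = μ.real {x | b' < |c + x|} + μ.real {x | |c + x| ∈ Ioc b b'} := by
    rw [← measureReal_union _ (hmeas measurableSet_Ioc)]
    · congr 1
      ext x
      simp only [mem_union, mem_ofPred_eq, mem_Ioc]
      grind
    · exact Set.disjoint_left.2 fun x hx hx' => hx'.2.not_gt hx
  have hshell : μ.real {x | |c + x| ∈ Ioc b b'} ≤ μ.real {x | |c + x| ∈ Ico a' a} :=
    ENNReal.toReal_mono (measure_ne_top _ _) <|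
      measure_abs_add_mem_Ioc_le hμ ha' (by linarith) hc (by linarith) hgap
  linarith

end Unimodal

section Main

variable {μ : Measure ℝ} {Φ : ℝ → ℝ}

lemma measureReal_sublevel_le_of_apply_sub_eq_sub [IsFiniteMeasure μ] (hμ : IsSymmUnimodal μ)
    (hΦ : ConvexOn ℝ univ Φ) (heven : Φ.Even) {c a' a b b' : ℝ} (ha'_nonneg : 0 ≤ a')
    (ha_nonneg : 0 ≤ a) (hb_nonneg : 0 ≤ b) (hb'_nonneg : 0 ≤ b') (ha' : Φ 0 < Φ a')
    (ha : Φ a' < Φ a) (hab : Φ a < Φ b) (hb : Φ b < Φ b') (hlevels : Φ b' - Φ b = Φ a - Φ a')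
    (h : μ.real {x | Φ (c + x) < Φ a} ≤ μ.real {x | Φ b < Φ (c + x)}) :
    μ.real {x | Φ (c + x) < Φ a'} ≤ μ.real {x | Φ b' < Φ (c + x)} := by
  have apply_lt_iff {r : ℝ} (hr : 0 ≤ r) (hpos : Φ 0 < Φ r) (x : ℝ) : Φ x < Φ r ↔ |x| < r := by
    rw [lt_iff_abs_lt_of_convexOn_of_even hΦ heven (.inr hpos), abs_of_nonneg hr]
  have lt_apply_iff {r : ℝ} (hr : 0 ≤ r) (hpos : Φ 0 < Φ r) (x : ℝ) : Φ r < Φ x ↔ r < |x| := by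
    rw [lt_iff_abs_lt_of_convexOn_of_even hΦ heven (.inl hpos), abs_of_nonneg hr]
  have radius_lt {r q : ℝ} (hr : 0 ≤ r) (hq : 0 ≤ q) (hpos : Φ 0 < Φ q) (hrq : Φ r < Φ q) :
      r < q := by
    simpa [abs_of_nonneg hr] using (apply_lt_iff hq hpos r).1 hrq
  have ha_pos := ha'.trans ha
  have hb_pos := ha_pos.trans hab
  have hb'_pos := hb_pos.trans hb
  have ha'0 : 0 < a' := radius_lt le_rfl ha'_nonneg ha' ha'
  have ha'a : a' < a := radius_lt ha'_nonneg ha_nonneg ha_pos ha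
  have ha_b : a < b := radius_lt ha_nonneg hb_nonneg hb_pos hab
  have hbb' : b < b' := radius_lt hb_nonneg hb'_nonneg hb'_pos hb
  have hgap : b' - b ≤ a - a' :=
    sub_le_sub_of_convexOn_of_sub_eq_sub hΦ (mem_univ _) (mem_univ _) ha'a ha_b hbb' ha hlevels
  simp only [apply_lt_iff ha_nonneg ha_pos, lt_apply_iff hb_nonneg hb_pos] at h
  simp only [apply_lt_iff ha'_nonneg ha', lt_apply_iff hb'_nonneg hb'_pos]
  exact measureReal_abs_add_lt_le_of_gap_le hμ ha'0 ha'a.le ha_b.le hbb'.le hgap h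

lemma tailGap_nonneg_of_lt_of_tailGap_pos [IsFiniteMeasure μ] (hμ : IsSymmUnimodal μ)
    (hΦ : ConvexOn ℝ univ Φ) (heven : Φ.Even) (c m : ℝ) {s t : ℝ} (hs : 0 < s) (hst : s < t)
    (hgap : 0 < tailGap μ (fun x => Φ (c + x) - m) s) :
    0 ≤ tailGap μ (fun x => Φ (c + x) - m) t := by
  rw [tailGap_sub_const, sub_pos] at hgap
  rw [tailGap_sub_const, sub_nonneg]
  rcases le_or_gt (m - t) (Φ 0) with hlow | hlow
  · have hempty : {x | Φ (c + x) < m - t} = ∅ := eq_empty_of_forall_notMem fun x hx =>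
      (le_of_convexOn_of_even_of_abs_le hΦ heven (by simp)).not_gt (lt_of_lt_of_le hx hlow)
    simp [hempty]
  obtain ⟨x₀, hx₀⟩ : {x | m + s < Φ (c + x)}.Nonempty :=
    nonempty_of_measureReal_ne_zero (measureReal_nonneg.trans_lt hgap).ne'
  have hnonconst : Φ 0 < Φ (c + x₀) := lt_trans (by linarith) hx₀
  have exists_radius (l : ℝ) (hl : Φ 0 ≤ l) : ∃ r, 0 ≤ r ∧ Φ r = l :=
    exists_nonneg_apply_eq_of_convexOn_of_even hΦ heven hnonconst hl
  obtain ⟨a', ha'_nonneg, ha'⟩ := exists_radius (m - t) hlow.le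
  obtain ⟨a, ha_nonneg, ha⟩ := exists_radius (m - s) (by linarith)
  obtain ⟨b, hb_nonneg, hb⟩ := exists_radius (m + s) (by linarith)
  obtain ⟨b', hb'_nonneg, hb'⟩ := exists_radius (m + t) (by linarith)
  rw [← ha, ← hb] at hgap
  rw [← ha', ← hb']
  exact measureReal_sublevel_le_of_apply_sub_eq_sub hμ hΦ heven ha'_nonneg ha_nonneg hb_nonneg
    hb'_nonneg (by linarith) (by linarith) (by linarith) (by linarith) (by linarith) hgap.le

theorem centralMoment_nonneg_of_odd [IsProbabilityMeasure μ] (hμ : IsSymmUnimodal μ)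
    (hΦ : ConvexOn ℝ univ Φ) (heven : Φ.Even) (c : ℝ) {n : ℕ} (hn : Odd n)
    (hint : MemLp (fun x => Φ (c + x)) n μ) :
    0 ≤ centralMoment (fun x => Φ (c + x)) n μ := by
  have hint1 : Integrable (fun x => Φ (c + x)) μ :=
    hint.integrable (by exact_mod_cast hn.pos)
  refine integral_odd_pow_nonneg_of_tailGap_crossing hn (hint.sub (memLp_const _)) ?_
    fun s t hs hst => tailGap_nonneg_of_lt_of_tailGap_pos hμ hΦ heven c _ hs hst
  simp [integral_sub hint1 (integrable_const _)]

lemma centralMoment_three_eq {Ω : Type*} [MeasurableSpace Ω] {μ : Measure Ω}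
    [IsProbabilityMeasure μ] {Y : Ω → ℝ} (hY : MemLp Y 3 μ) :
    centralMoment Y 3 μ
      = ∫ ω, Y ω ^ 3 ∂μ - 3 * (∫ ω, Y ω ^ 2 ∂μ) * (∫ ω, Y ω ∂μ) + 2 * (∫ ω, Y ω ∂μ) ^ 3 := by
  have hY1 : Integrable Y μ := hY.integrable (by norm_num)
  have hY2 : Integrable (fun ω => Y ω ^ 2) μ := (hY.mono_exponent (by norm_num)).integrable_sq
  have hY3 : Integrable (fun ω => Y ω ^ 3) μ :=
    (memLp_iff_integrable_pow hY.1 three_ne_zero).1 hY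
  set m := ∫ ω, Y ω ∂μ with hm
  calc centralMoment Y 3 μ
      = ∫ ω, (Y ω ^ 3 - 3 * m * Y ω ^ 2 + 3 * m ^ 2 * Y ω - m ^ 3) ∂μ := by
        simp only [centralMoment, Pi.pow_apply, Pi.sub_apply, ← hm]
        congr with ω
        ring
    _ = ∫ ω, Y ω ^ 3 ∂μ - 3 * m * ∫ ω, Y ω ^ 2 ∂μ + 3 * m ^ 2 * m - m ^ 3 := by
        rw [integral_sub (by fun_prop) (by fun_prop), integral_add (by fun_prop) (by fun_prop),
          integral_sub (by fun_prop) (by fun_prop), integral_const_mul, integral_const_mul]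
        simp [hm]
    _ = ∫ ω, Y ω ^ 3 ∂μ - 3 * (∫ ω, Y ω ^ 2 ∂μ) * m + 2 * m ^ 3 := by ring

theorem third_cumulant_nonneg_general [IsProbabilityMeasure μ] (hμ : IsSymmUnimodal μ)
    (hΦ : ConvexOn ℝ univ Φ) (heven : Φ.Even) (h σ : ℝ)
    (hint : Integrable (fun z => Φ (h + σ * z) ^ 3) μ) :
    0 ≤ (∫ z, Φ (h + σ * z) ^ 3 ∂μ)
      - 3 * (∫ z, Φ (h + σ * z) ^ 2 ∂μ) * (∫ z, Φ (h + σ * z) ∂μ)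
      + 2 * (∫ z, Φ (h + σ * z) ∂μ) ^ 3 := by
  rcases eq_or_ne σ 0 with rfl | hσ
  · simp only [zero_mul, add_zero, integral_const, probReal_univ, one_smul]
    exact le_of_eq (by ring)
  have hcont : Continuous Φ := continuousOn_univ.1 (hΦ.continuousOn isOpen_univ)
  have hL3 : MemLp (fun z => Φ (h + σ * z)) 3 μ :=
    (memLp_iff_integrable_pow (by fun_prop) three_ne_zero).2 hint
  have hscale : (fun z => Φ (h + σ * z)) = fun z => Φ (σ * (h / σ + z)) := by
    ext z
    rw [mul_add, mul_div_cancel₀ h hσ]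
  have hΦσ : ConvexOn ℝ univ fun z => Φ (σ * z) := hΦ.comp_linearMap (LinearMap.mulLeft ℝ σ)
  have hevenσ : (fun z => Φ (σ * z)).Even := fun z => by simp [heven (σ * z)]
  rw [← centralMoment_three_eq hL3, hscale]
  exact centralMoment_nonneg_of_odd hμ hΦσ hevenσ (h / σ) (by decide : Odd 3) (hscale ▸ hL3)

end Main

/-- The third cumulant of `η = Φ (h + σ z)` is nonnegative. -/
theorem third_cumulant_nonneg
    (Φ : ℝ → ℝ) (hΦsmooth : ContDiff ℝ (⊤ : ℕ∞) Φ)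
    (hΦconv : ConvexOn ℝ Set.univ Φ)
    (hΦsymm : ∀ x, Φ (-x) = Φ x) (hΦ0 : Φ 0 = 0)
    (h σ : ℝ) (hσ : 0 < σ)
    (hint : ∀ p : ℕ, Integrable (fun z => (Φ (h + σ * z)) ^ p) (gaussianReal 0 1)) :
    (∫ z, (Φ (h + σ * z)) ^ 3 ∂(gaussianReal 0 1))
      - 3 * (∫ z, (Φ (h + σ * z)) ^ 2 ∂(gaussianReal 0 1))
          * (∫ z, Φ (h + σ * z) ∂(gaussianReal 0 1))
      + 2 * (∫ z, Φ (h + σ * z) ∂(gaussianReal 0 1)) ^ 3 ≥ 0 :=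
  third_cumulant_nonneg_general (isSymmUnimodal_gaussianReal one_ne_zero) hΦconv hΦsymm h σ (hint 3)
end

section
/- For every λ ∈ [0,1], E[exp(λη)] ≤ (E[exp η])^{λ²} · exp(λ(1-λ) E[η]), where η = Φ(h + σz). -/
open MeasureTheory ProbabilityTheory Real

/-!
The bound is stable under affine changes of variable, so let `γ` be the standard Gaussian measure
and `g` convex. The increasing map `T` transporting `γ` to its tilt `exp (l * g) γ / Z_l`, where
`Z_l = ∫ exp (l * g) dγ`, satisfies `T' ≥ 1`, since tilting by a convex function makes `γ` less
log-concave. Write `T x = x + l * v x` with `v' ≥ 0`, and take the logarithm of the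
transport equation:
`log Z_l = log (1 + l * v') + (x² - (x + l * v)²) / 2 + l * g (x + l * v)`.
The first term is at most `l² * log (1 + v') + l * (1 - l) * v'`, the quadratic term equals
`l² * (x² - (x + v)²) / 2 - l * (1 - l) * x * v`, and by convexity the last one is at most
`l² * g (x + v) + l * (1 - l) * g x`. Integrate against `γ`: the terms in `v' - x * v` vanish by
Stein's identity, and the terms weighted by `l²` are the logarithm of the integrand of
`∫ exp g dγ` after the substitution `y = x + v x`, so Jensen's inequality bounds their integral by
`log ∫ exp g dγ`.
-/

open Filter Set Topology

section Calculus

lemma continuous_of_convexOn_univ {E : Type*} [NormedAddCommGroup E] [NormedSpace ℝ E]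
    [FiniteDimensional ℝ E] {f : E → ℝ} (hf : ConvexOn ℝ univ f) : Continuous f :=
  continuousOn_univ.1 (hf.continuousOn isOpen_univ)

lemma log_add_add_le_mul_exp_mul_exp_div {a b : ℝ} (ha : 0 < a) (hb : 0 < b) (s t : ℝ) :
    log a + s + t ≤ a * exp s * exp t / b - 1 + log b := by
  have hprod : log (a * exp s * exp t) = log a + s + t := by
    rw [log_mul (by positivity) (exp_pos t).ne', log_mul ha.ne' (exp_pos s).ne', log_exp, log_exp]
  have htangent : log (a * exp s * exp t / b) ≤ a * exp s * exp t / b - 1 :=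
    log_le_sub_one_of_pos (by positivity)
  rw [log_div (by positivity) hb.ne', hprod] at htangent
  linarith

lemma log_one_add_mul_le {l a : ℝ} (hl0 : 0 ≤ l) (hl1 : l ≤ 1) (ha : 0 ≤ a) :
    log (1 + l * a) ≤ l ^ 2 * log (1 + a) + l * (1 - l) * a := by
  let gap (x : ℝ) : ℝ := l ^ 2 * log (1 + x) + l * (1 - l) * x - log (1 + l * x)
  have hgap' : ∀ x, 0 ≤ x →
      HasDerivAt gap (l ^ 2 * (1 - l) * x ^ 2 / ((1 + x) * (1 + l * x))) x := by
    intro x hx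
    have hlog : HasDerivAt (fun x ↦ log (1 + x)) (1 / (1 + x)) x :=
      ((hasDerivAt_id x).const_add 1).log (by positivity)
    have hlog_mul : HasDerivAt (fun x ↦ log (1 + l * x)) (l * 1 / (1 + l * x)) x :=
      (((hasDerivAt_id x).const_mul l).const_add 1).log (by positivity)
    convert! ((hlog.const_mul (l ^ 2)).add ((hasDerivAt_id x).const_mul (l * (1 - l)))).sub
      hlog_mul using 1
    field_simp
    ring
  have hmono : MonotoneOn gap (Ici 0) := by
    refine monotoneOn_of_hasDerivWithinAt_nonneg (convex_Ici 0)
      (fun x hx ↦ (hgap' x hx).continuousAt.continuousWithinAt)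
      (fun x hx ↦ (hgap' x (interior_subset hx)).hasDerivWithinAt) fun x hx ↦ ?_
    have hx0 : 0 ≤ x := interior_subset hx
    have : 0 ≤ 1 - l := sub_nonneg.2 hl1
    positivity
  have := hmono self_mem_Ici ha ha
  simp only [gap, mul_zero, add_zero, log_one, sub_zero] at this
  linarith

lemma integral_nonpos_of_le_deriv {f F F' : ℝ → ℝ} (hF : ∀ x, HasDerivAt F (F' x) x)
    (hf : Integrable f) (hFint : Integrable F) (hle : ∀ x, f x ≤ F' x) : ∫ x, f x ≤ 0 := by
  have hsymm : ∀ n : ℝ, 0 ≤ n → ∫ x in (-n)..n, f x ≤ F n - F (-n) := fun n hn ↦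
    intervalIntegral.integral_le_sub_of_hasDeriv_right_of_le (neg_le_self hn)
      (fun x _ ↦ (hF x).continuousAt.continuousWithinAt) (fun x _ ↦ (hF x).hasDerivWithinAt)
      hf.integrableOn fun x _ ↦ hle x
  have hlim : Tendsto (fun n : ℝ ↦ ∫ x in (-n)..n, f x) atTop (𝓝 (∫ x, f x)) :=
    intervalIntegral_tendsto_integral hf tendsto_neg_atTop_atBot tendsto_id
  by_contra! hpos
  -- Otherwise the integrable function `F n - F (-n)` would be bounded below near infinity.
  obtain ⟨N, hN⟩ := eventually_atTop.1
    ((hlim.eventually_const_lt (half_lt_self hpos)).and (eventually_ge_atTop 0))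
  have hsub : Ici N ⊆ {n | (∫ x, f x) / 2 ≤ ‖F n - F (-n)‖} := fun n hn ↦
    ((hN n hn).1.le.trans (hsymm n (hN n hn).2)).trans (le_abs_self _)
  have hfin := (measure_mono hsub).trans_lt
    ((hFint.sub hFint.comp_neg).measure_norm_ge_lt_top (half_pos hpos))
  simp at hfin

lemma lt_of_tendsto_atBot_of_deriv_pos {f f' : ℝ → ℝ} {c x : ℝ}
    (hf : ∀ u, HasDerivAt f (f' u) u) (hlim : Tendsto f atBot (𝓝 c))
    (hpos : ∀ u ≤ x, 0 < f' u) : c < f x := by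
  have hmono : StrictMonoOn f (Iic x) := strictMonoOn_of_hasDerivWithinAt_pos (convex_Iic x)
    (fun u _ ↦ (hf u).continuousAt.continuousWithinAt) (fun u _ ↦ (hf u).hasDerivWithinAt)
    fun u hu ↦ hpos u (mem_Iic.1 (interior_subset hu))
  have hc : c ≤ f (x - 1) := by
    refine le_of_tendsto hlim ((eventually_le_atBot (x - 1)).mono fun u hu ↦ ?_)
    exact hmono.monotoneOn (hu.trans (by simp)) (by simp) hu
  exact hc.trans_lt (hmono (by simp) self_mem_Iic (by linarith))

lemma deriv_nonpos_of_ordConnected_of_tendsto {f f' : ℝ → ℝ} {c x : ℝ}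
    (hf : ∀ u, HasDerivAt f (f' u) u) (hbot : Tendsto f atBot (𝓝 c))
    (htop : Tendsto f atTop (𝓝 c)) (hconn : {u | f' u ≤ 0}.OrdConnected) (hx : f x = c) :
    f' x ≤ 0 := by
  by_contra! hpos
  have hray : (∀ u ≤ x, 0 < f' u) ∨ ∀ u, x ≤ u → 0 < f' u := by
    by_contra! ⟨⟨u, hux, hu⟩, ⟨w, hxw, hw⟩⟩
    exact hpos.not_ge (hconn.out hu hw ⟨hux, hxw⟩)
  rcases hray with hleft | hright
  · exact (lt_of_tendsto_atBot_of_deriv_pos hf hbot hleft).ne' hx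
  · have hrefl : ∀ u, HasDerivAt (fun u ↦ -f (-u)) (f' (-u)) u := fun u ↦ by
      simpa using! ((hf (-u)).comp u (hasDerivAt_neg u)).neg
    have := lt_of_tendsto_atBot_of_deriv_pos (x := -x) hrefl
      (htop.comp tendsto_neg_atBot_atTop).neg fun u hu ↦ hright _ (le_neg_of_le_neg hu)
    simp [hx] at this

lemma hasDerivAt_of_comp_eq {f f' g T : ℝ → ℝ} {g' x : ℝ} (hf : ∀ y, HasDerivAt f (f' y) y)
    (hf' : ContinuousAt f' (T x)) (hne : f' (T x) ≠ 0) (hT : ContinuousAt T x)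
    (hg : HasDerivAt g g' x) (hcomp : ∀ u, f (T u) = g u) : HasDerivAt T (g' / f' (T x)) x := by
  have hstrict : HasStrictDerivAt f (f' (T x)) (T x) :=
    hasStrictDerivAt_of_hasDerivAt_of_continuousAt (Eventually.of_forall hf) hf'
  have hinv := (hstrict.to_localInverse hne).hasDerivAt
  rw [hcomp] at hinv
  have hev := hT.eventually
    (HasStrictFDerivAt.eventually_left_inverse (hstrict.hasStrictFDerivAt_equiv hne))
  rw [div_eq_inv_mul]
  refine (hinv.comp x hg).congr_of_eventuallyEq (hev.mono fun u hu ↦ ?_)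
  rw [hcomp] at hu
  exact hu.symm

end Calculus

/-- `μ` is absolutely continuous on the line, with the continuous, everywhere positive
density `p`. -/
structure HasPosContDensity (μ : Measure ℝ) (p : ℝ → ℝ) : Prop where
  continuous : Continuous p
  pos : ∀ x, 0 < p x
  eq_withDensity : μ = volume.withDensity fun x ↦ ENNReal.ofReal (p x)

/-- The monotone rearrangement of `μ` onto `ν`, the map `F_ν⁻¹ ∘ F_μ` built from the distribution
functions. Values where `F_μ x` is not in the range of `F_ν` are junk. -/
noncomputable def monotoneRearrangement (μ ν : Measure ℝ) (x : ℝ) : ℝ :=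
  Function.invFun (cdf ν) (cdf μ x)

namespace HasPosContDensity

variable {μ ν : Measure ℝ} {p q : ℝ → ℝ}

lemma integral_eq (hμ : HasPosContDensity μ p) (f : ℝ → ℝ) :
    ∫ x, f x ∂μ = ∫ x, p x * f x := by
  rw [hμ.eq_withDensity, integral_withDensity_eq_integral_toReal_smul
    hμ.continuous.measurable.ennreal_ofReal (by simp)]
  simp [ENNReal.toReal_ofReal (hμ.pos _).le]

lemma integrable_iff (hμ : HasPosContDensity μ p) (f : ℝ → ℝ) :
    Integrable f μ ↔ Integrable fun x ↦ p x * f x := by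
  rw [hμ.eq_withDensity, integrable_withDensity_iff_integrable_smul'
    hμ.continuous.measurable.ennreal_ofReal (by simp)]
  simp [ENNReal.toReal_ofReal (hμ.pos _).le]

lemma tilted [NeZero μ] (hμ : HasPosContDensity μ p) {f : ℝ → ℝ} (hf : Continuous f)
    (hexp : Integrable (fun x ↦ exp (f x)) μ) :
    HasPosContDensity (μ.tilted f) fun x ↦ p x * (exp (f x) / ∫ y, exp (f y) ∂μ) where
  continuous := hμ.continuous.mul (hf.rexp.div_const _)
  pos x := mul_pos (hμ.pos x) (div_pos (exp_pos _) (integral_exp_pos hexp))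
  eq_withDensity := by
    have hp : Measurable fun x ↦ ENNReal.ofReal (p x) :=
      hμ.continuous.measurable.ennreal_ofReal
    have hf' : Measurable fun x ↦ ENNReal.ofReal (exp (f x) / ∫ y, exp (f y) ∂μ) := by fun_prop
    rw [Measure.tilted]
    nth_rw 1 [hμ.eq_withDensity]
    rw [← withDensity_mul _ hp hf']
    congr 1 with x
    rw [Pi.mul_apply, ENNReal.ofReal_mul (hμ.pos x).le]

variable [IsProbabilityMeasure μ] [IsProbabilityMeasure ν]

lemma hasDerivAt_cdf (hμ : HasPosContDensity μ p) (x : ℝ) : HasDerivAt (cdf μ) (p x) x := by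
  have hint : Integrable p := by simpa using (hμ.integrable_iff fun _ ↦ 1).1 (integrable_const 1)
  have hcdf : ∀ y, cdf μ y = ∫ t in Iic y, p t := fun y ↦ by
    rw [cdf_eq_real, hμ.eq_withDensity, measureReal_def, withDensity_apply _ measurableSet_Iic,
      integral_eq_lintegral_of_nonneg_ae (ae_of_all _ fun t ↦ (hμ.pos t).le)
        hμ.continuous.aestronglyMeasurable]
  have hsplit : ∀ y, cdf μ y = cdf μ 0 + ∫ t in (0)..y, p t := fun y ↦ by
    rw [hcdf, hcdf, ← intervalIntegral.integral_Iic_sub_Iic hint.integrableOn hint.integrableOn]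
    ring
  exact ((hμ.continuous.integral_hasStrictDerivAt 0 x).hasDerivAt.const_add _).congr_of_eventuallyEq
    (Eventually.of_forall hsplit)

lemma strictMono_cdf (hμ : HasPosContDensity μ p) : StrictMono (cdf μ) :=
  strictMono_of_hasDerivAt_pos hμ.hasDerivAt_cdf hμ.pos

lemma range_cdf (hμ : HasPosContDensity μ p) : range (cdf μ) = Ioo 0 1 := by
  have hcont : Continuous (cdf μ) :=
    continuous_iff_continuousAt.2 fun x ↦ (hμ.hasDerivAt_cdf x).continuousAt
  refine Subset.antisymm ?_ fun y hy ↦ ?_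
  · rintro _ ⟨x, rfl⟩
    exact ⟨(cdf_nonneg μ (x - 1)).trans_lt (hμ.strictMono_cdf (by linarith)),
      (hμ.strictMono_cdf (by linarith)).trans_le (cdf_le_one μ (x + 1))⟩
  · obtain ⟨a, ha⟩ := ((tendsto_cdf_atBot μ).eventually_lt_const hy.1).exists
    obtain ⟨b, hb⟩ := ((tendsto_cdf_atTop μ).eventually_const_lt hy.2).exists
    exact mem_range_of_exists_le_of_exists_ge hcont ⟨a, ha.le⟩ ⟨b, hb.le⟩

lemma cdf_monotoneRearrangement (hμ : HasPosContDensity μ p) (hν : HasPosContDensity ν q)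
    (x : ℝ) : cdf ν (monotoneRearrangement μ ν x) = cdf μ x :=
  Function.invFun_eq (by
    rw [← mem_range, hν.range_cdf, ← hμ.range_cdf]
    exact mem_range_self x)

lemma strictMono_monotoneRearrangement (hμ : HasPosContDensity μ p)
    (hν : HasPosContDensity ν q) : StrictMono (monotoneRearrangement μ ν) := fun x y hxy ↦ by
  rw [← hν.strictMono_cdf.lt_iff_lt, hμ.cdf_monotoneRearrangement hν,
    hμ.cdf_monotoneRearrangement hν]
  exact hμ.strictMono_cdf hxy

lemma surjective_monotoneRearrangement (hμ : HasPosContDensity μ p)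
    (hν : HasPosContDensity ν q) : Function.Surjective (monotoneRearrangement μ ν) := fun y ↦ by
  obtain ⟨x, hx⟩ : cdf ν y ∈ range (cdf μ) := by
    rw [hμ.range_cdf, ← hν.range_cdf]; exact mem_range_self y
  exact ⟨x, hν.strictMono_cdf.injective (by rw [hμ.cdf_monotoneRearrangement hν, hx])⟩

lemma hasDerivAt_monotoneRearrangement (hμ : HasPosContDensity μ p)
    (hν : HasPosContDensity ν q) (x : ℝ) :
    HasDerivAt (monotoneRearrangement μ ν) (p x / q (monotoneRearrangement μ ν x)) x := by
  have hcont : Continuous (monotoneRearrangement μ ν) :=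
    (hμ.strictMono_monotoneRearrangement hν).monotone.continuous_of_surjective
      (hμ.surjective_monotoneRearrangement hν)
  exact hasDerivAt_of_comp_eq hν.hasDerivAt_cdf hν.continuous.continuousAt (hν.pos _).ne'
    hcont.continuousAt (hμ.hasDerivAt_cdf x) (hμ.cdf_monotoneRearrangement hν)

lemma map_monotoneRearrangement (hμ : HasPosContDensity μ p) (hν : HasPosContDensity ν q) :
    μ.map (monotoneRearrangement μ ν) = ν := by
  have hmono := hμ.strictMono_monotoneRearrangement hν
  have hmeas := hmono.monotone.measurable
  have := Measure.isProbabilityMeasure_map (μ := μ) hmeas.aemeasurable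
  refine Measure.eq_of_cdf _ _ (StieltjesFunction.ext fun y ↦ ?_)
  obtain ⟨x, rfl⟩ := hμ.surjective_monotoneRearrangement hν y
  have hpre : monotoneRearrangement μ ν ⁻¹' Iic (monotoneRearrangement μ ν x) = Iic x := by
    ext; simp [hmono.le_iff_le]
  rw [hμ.cdf_monotoneRearrangement hν, cdf_eq_real, cdf_eq_real,
    map_measureReal_apply hmeas measurableSet_Iic, hpre]

/-- Otherwise the shifted density would exceed `p` on a half-line starting at `x`, forcing the two
distribution functions to have different limits there. -/
lemma density_le_of_cdf_eq (hμ : HasPosContDensity μ p) (hν : HasPosContDensity ν q) {x y : ℝ}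
    (hxy : cdf ν y = cdf μ x) (hconn : {u | q (u + (y - x)) ≤ p u}.OrdConnected) :
    q y ≤ p x := by
  have hbot : Tendsto (fun u ↦ cdf ν (u + (y - x)) - cdf μ u) atBot (𝓝 0) := by
    simpa using ((tendsto_cdf_atBot ν).comp
      (tendsto_atBot_add_const_right _ (y - x) tendsto_id)).sub (tendsto_cdf_atBot μ)
  have htop : Tendsto (fun u ↦ cdf ν (u + (y - x)) - cdf μ u) atTop (𝓝 0) := by
    simpa using ((tendsto_cdf_atTop ν).comp
      (tendsto_atTop_add_const_right _ (y - x) tendsto_id)).sub (tendsto_cdf_atTop μ)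
  simpa using deriv_nonpos_of_ordConnected_of_tendsto (x := x)
    (fun u ↦ ((hν.hasDerivAt_cdf _).comp_add_const u (y - x)).sub (hμ.hasDerivAt_cdf u))
    hbot htop (by simpa using hconn) (by simp [hxy])

end HasPosContDensity

section Gaussian

lemma hasPosContDensity_gaussianReal (μ : ℝ) {v : NNReal} (hv : v ≠ 0) :
    HasPosContDensity (gaussianReal μ v) (gaussianPDFReal μ v) where
  continuous := by rw [gaussianPDFReal_def]; fun_prop
  pos x := gaussianPDFReal_pos μ v x hv
  eq_withDensity := gaussianReal_of_var_ne_zero μ hv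

lemma gaussianPDFReal_zero_one_eq_mul_exp (x y : ℝ) :
    gaussianPDFReal 0 1 y = gaussianPDFReal 0 1 x * exp ((x ^ 2 - y ^ 2) / 2) := by
  simp only [gaussianPDFReal, sub_zero, NNReal.coe_one, mul_one]
  rw [mul_assoc, ← exp_add]
  ring_nf

lemma hasDerivAt_gaussianPDFReal_zero_one (x : ℝ) :
    HasDerivAt (gaussianPDFReal 0 1) (-x * gaussianPDFReal 0 1 x) x := by
  have hexponent : HasDerivAt (fun y : ℝ ↦ (0 ^ 2 - y ^ 2) / 2) (-x) x := by
    refine (((hasDerivAt_pow 2 x).const_sub _).div_const 2).congr_deriv ?_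
    norm_num
    ring
  refine ((hexponent.exp.const_mul (gaussianPDFReal 0 1 0)).congr_deriv ?_).congr_of_eventuallyEq
    (Eventually.of_forall fun y ↦ gaussianPDFReal_zero_one_eq_mul_exp 0 y)
  rw [gaussianPDFReal_zero_one_eq_mul_exp 0 x]
  ring

/-- A one-sided form of Stein's identity `∫ (w' - x w) dγ = 0` that does not presuppose the
integrability of `w'`. -/
lemma integral_gaussianReal_nonpos_of_le_deriv_sub_mul {k w w' : ℝ → ℝ}
    (hw : ∀ x, HasDerivAt w (w' x) x) (hk : Integrable k (gaussianReal 0 1))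
    (hwint : Integrable w (gaussianReal 0 1)) (hle : ∀ x, k x ≤ w' x - x * w x) :
    ∫ x, k x ∂gaussianReal 0 1 ≤ 0 := by
  have hγ := hasPosContDensity_gaussianReal 0 one_ne_zero
  rw [hγ.integral_eq]
  refine integral_nonpos_of_le_deriv
    (fun x ↦ (hasDerivAt_gaussianPDFReal_zero_one x).mul (hw x))
    ((hγ.integrable_iff _).1 hk) ((hγ.integrable_iff _).1 hwint) fun x ↦ ?_
  calc gaussianPDFReal 0 1 x * k x
      ≤ gaussianPDFReal 0 1 x * (w' x - x * w x) :=
        mul_le_mul_of_nonneg_left (hle x) (hγ.pos x).le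
    _ = -x * gaussianPDFReal 0 1 x * w x + gaussianPDFReal 0 1 x * w' x := by ring

lemma gaussianReal_eq_map_gaussianReal_zero_one (μ : ℝ) (v : NNReal) :
    gaussianReal μ v = (gaussianReal 0 1).map fun z ↦ μ + √v * z := by
  have hcomp : (fun z : ℝ ↦ μ + √v * z) = (fun x ↦ μ + x) ∘ fun z ↦ √v * z := rfl
  rw [hcomp, ← Measure.map_map (by fun_prop) (by fun_prop), gaussianReal_map_const_mul,
    gaussianReal_map_const_add]
  congr 1
  · simp
  · ext
    simp

section ChangeOfVariables

variable {f R R' : ℝ → ℝ}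

lemma gaussianPDFReal_mul_deriv_mul_exp_mul_comp (x : ℝ) :
    gaussianPDFReal 0 1 x * (R' x * exp ((x ^ 2 - R x ^ 2) / 2) * f (R x)) =
      R' x • (gaussianPDFReal 0 1 (R x) * f (R x)) := by
  rw [gaussianPDFReal_zero_one_eq_mul_exp x (R x), smul_eq_mul]
  ring

lemma integrable_gaussianReal_deriv_mul_exp_mul_comp (hR : ∀ x, HasDerivAt R (R' x) x)
    (hmono : Monotone R) (hf : Integrable f (gaussianReal 0 1)) :
    Integrable (fun x ↦ R' x * exp ((x ^ 2 - R x ^ 2) / 2) * f (R x)) (gaussianReal 0 1) := by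
  have hγ := hasPosContDensity_gaussianReal 0 one_ne_zero
  rw [hγ.integrable_iff] at hf ⊢
  simp only [gaussianPDFReal_mul_deriv_mul_exp_mul_comp]
  rw [← integrableOn_univ]
  exact (integrableOn_image_iff_integrableOn_deriv_smul_of_monotoneOn MeasurableSet.univ
    (fun x _ ↦ (hR x).hasDerivWithinAt) (hmono.monotoneOn _) _).1 hf.integrableOn

/-- There is only an inequality because `R` need not be surjective. -/
lemma integral_gaussianReal_deriv_mul_exp_mul_comp_le (hR : ∀ x, HasDerivAt R (R' x) x)
    (hmono : Monotone R) (hf : Integrable f (gaussianReal 0 1)) (hf0 : ∀ x, 0 ≤ f x) :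
    ∫ x, R' x * exp ((x ^ 2 - R x ^ 2) / 2) * f (R x) ∂gaussianReal 0 1 ≤
      ∫ x, f x ∂gaussianReal 0 1 := by
  have hγ := hasPosContDensity_gaussianReal 0 one_ne_zero
  rw [hγ.integral_eq, hγ.integral_eq]
  simp only [gaussianPDFReal_mul_deriv_mul_exp_mul_comp]
  rw [← setIntegral_univ, ← integral_image_eq_integral_deriv_smul_of_monotoneOn MeasurableSet.univ
    (fun x _ ↦ (hR x).hasDerivWithinAt) (hmono.monotoneOn _) fun x ↦ gaussianPDFReal 0 1 x * f x]
  exact setIntegral_le_integral ((hγ.integrable_iff _).1 hf)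
    (ae_of_all _ fun x ↦ mul_nonneg (hγ.pos x).le (hf0 x))

end ChangeOfVariables

section TiltedTransport

/-- The monotone rearrangement of the standard Gaussian measure onto its exponential tilt by `f`. -/
noncomputable def gaussianTiltTransport (f : ℝ → ℝ) : ℝ → ℝ :=
  monotoneRearrangement (gaussianReal 0 1) ((gaussianReal 0 1).tilted f)

variable {f : ℝ → ℝ}

lemma hasDerivAt_gaussianTiltTransport (hf : Continuous f)
    (hexp : Integrable (fun x ↦ exp (f x)) (gaussianReal 0 1)) (x : ℝ) :
    HasDerivAt (gaussianTiltTransport f)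
      (exp ((gaussianTiltTransport f x ^ 2 - x ^ 2) / 2 - f (gaussianTiltTransport f x) +
        log (∫ y, exp (f y) ∂gaussianReal 0 1))) x := by
  have hγ := hasPosContDensity_gaussianReal 0 one_ne_zero
  have := isProbabilityMeasure_tilted hexp
  refine (hγ.hasDerivAt_monotoneRearrangement (hγ.tilted hf hexp) x).congr_deriv ?_
  change gaussianPDFReal 0 1 x / (gaussianPDFReal 0 1 (gaussianTiltTransport f x) *
    (exp (f (gaussianTiltTransport f x)) / _)) = _
  have hφ := (hγ.pos (gaussianTiltTransport f x)).ne'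
  rw [exp_add, exp_sub, exp_log (integral_exp_pos hexp),
    gaussianPDFReal_zero_one_eq_mul_exp (gaussianTiltTransport f x) x]
  field_simp

lemma ordConnected_setOf_gaussianPDFReal_mul_exp_div_le (hf : ConvexOn ℝ univ f) (d : ℝ) {Z : ℝ}
    (hZ : 0 < Z) :
    {u | gaussianPDFReal 0 1 (u + d) * (exp (f (u + d)) / Z) ≤
      gaussianPDFReal 0 1 u}.OrdConnected := by
  have hiff : ∀ u, gaussianPDFReal 0 1 (u + d) * (exp (f (u + d)) / Z) ≤ gaussianPDFReal 0 1 u ↔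
      f (u + d) + -d * u ≤ log Z + d ^ 2 / 2 := fun u ↦ by
    rw [gaussianPDFReal_zero_one_eq_mul_exp u, mul_assoc,
      mul_le_iff_le_one_right (gaussianPDFReal_pos 0 1 u one_ne_zero),
      ← mul_div_assoc, ← exp_add, div_le_one hZ, ← le_log_iff_exp_le hZ]
    constructor <;> intro h <;> linarith
  have hconvex : ConvexOn ℝ univ fun u ↦ f (u + d) + -d * u := by
    have hshift : ConvexOn ℝ univ fun u ↦ f (u + d) := by
      simpa [Function.comp_def] using hf.translate_left d
    exact hshift.add ((LinearMap.mulLeft ℝ (-d)).convexOn convex_univ)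
  simpa only [hiff, mem_univ, true_and] using
    (hconvex.convex_le (log Z + d ^ 2 / 2)).ordConnected

/-- The expanding counterpart of Caffarelli's contraction theorem. -/
lemma one_le_deriv_gaussianTiltTransport (hf : ConvexOn ℝ univ f)
    (hexp : Integrable (fun x ↦ exp (f x)) (gaussianReal 0 1)) (x : ℝ) :
    1 ≤ deriv (gaussianTiltTransport f) x := by
  have hcont : Continuous f := continuous_of_convexOn_univ hf
  have hγ := hasPosContDensity_gaussianReal 0 one_ne_zero
  have hν := hγ.tilted hcont hexp
  have := isProbabilityMeasure_tilted hexp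
  rw [gaussianTiltTransport, (hγ.hasDerivAt_monotoneRearrangement hν x).deriv,
    one_le_div (hν.pos _)]
  exact hγ.density_le_of_cdf_eq hν (hγ.cdf_monotoneRearrangement hν x)
    (ordConnected_setOf_gaussianPDFReal_mul_exp_div_le hf _ (integral_exp_pos hexp))

lemma integrable_gaussianTiltTransport (hf : Continuous f)
    (hexp : Integrable (fun x ↦ exp (f x)) (gaussianReal 0 1))
    (hmoment : Integrable (fun x ↦ exp (f x) * x) (gaussianReal 0 1)) :
    Integrable (gaussianTiltTransport f) (gaussianReal 0 1) := by
  have hγ := hasPosContDensity_gaussianReal 0 one_ne_zero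
  have hν := hγ.tilted hf hexp
  have := isProbabilityMeasure_tilted hexp
  have hid : Integrable id ((gaussianReal 0 1).map (gaussianTiltTransport f)) := by
    rw [gaussianTiltTransport, hγ.map_monotoneRearrangement hν, integrable_tilted_iff hexp]
    exact hmoment
  exact hid.comp_measurable (hγ.strictMono_monotoneRearrangement hν).monotone.measurable

end TiltedTransport

section Integrability

lemma integrable_gaussianReal_of_convexOn {g : ℝ → ℝ} {μ : ℝ} {v : NNReal}
    (hg : ConvexOn ℝ univ g) (hexp : Integrable (fun x ↦ exp (g x)) (gaussianReal μ v)) :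
    Integrable g (gaussianReal μ v) := by
  have hcont : Continuous g := continuous_of_convexOn_univ hg
  have hexp_refl : Integrable (fun x ↦ exp (g (2 * μ - x))) (gaussianReal μ v) := by
    have hmap : (gaussianReal μ v).map (fun x ↦ 2 * μ - x) = gaussianReal μ v := by
      rw [gaussianReal_map_const_sub, two_mul, add_sub_cancel_right]
    rw [← hmap] at hexp
    exact hexp.comp_measurable (by fun_prop)
  refine ((hexp.add hexp_refl).add (integrable_const (2 * |g μ|))).mono'
    hcont.aestronglyMeasurable (ae_of_all _ fun x ↦ ?_)
  have hmid : 2 * g μ ≤ g x + g (2 * μ - x) := by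
    have := hg.2 (mem_univ x) (mem_univ (2 * μ - x)) one_half_pos.le one_half_pos.le (add_halves 1)
    rw [smul_eq_mul, smul_eq_mul, smul_eq_mul, smul_eq_mul,
      show 1 / 2 * x + 1 / 2 * (2 * μ - x) = μ by ring] at this
    linarith
  have hx := add_one_le_exp (g x)
  have hrefl := add_one_le_exp (g (2 * μ - x))
  have hmean := neg_abs_le (g μ)
  simp only [Pi.add_apply, norm_eq_abs, abs_le]
  constructor <;> linarith [exp_pos (g x), exp_pos (g (2 * μ - x)), abs_nonneg (g μ)]

lemma integrable_exp_mul_mul_id_gaussianReal {g : ℝ → ℝ} {l μ : ℝ} {v : NNReal}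
    (hl0 : 0 ≤ l) (hl1 : l < 1)
    (hexp : Integrable (fun x ↦ exp (g x)) (gaussianReal μ v)) :
    Integrable (fun x ↦ exp (l * g x) * x) (gaussianReal μ v) := by
  have hg : AEMeasurable g (gaussianReal μ v) :=
    aemeasurable_of_aemeasurable_exp hexp.1.aemeasurable
  have habs : Integrable (fun x ↦ exp ((1 - l)⁻¹ * |x|)) (gaussianReal μ v) :=
    integrable_exp_mul_abs (integrable_exp_mul_gaussianReal _) (integrable_exp_mul_gaussianReal _)
  refine ((hexp.const_mul l).add (habs.const_mul (1 - l))).mono' (by fun_prop)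
    (ae_of_all _ fun x ↦ ?_)
  have hl : 0 < 1 - l := sub_pos.2 hl1
  calc ‖exp (l * g x) * x‖ = exp (l * g x) * |x| := by simp
    _ ≤ exp (l * g x) * exp |x| := by
        gcongr
        linarith [add_one_le_exp |x|]
    _ = exp (l * g x + (1 - l) * ((1 - l)⁻¹ * |x|)) := by
        rw [← exp_add, mul_inv_cancel_left₀ hl.ne']
    _ ≤ l * exp (g x) + (1 - l) * exp ((1 - l)⁻¹ * |x|) :=
        convexOn_exp.2 (mem_univ _) (mem_univ _) hl0 hl.le (by ring)

end Integrability

end Gaussian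

section Interpolation

variable {g : ℝ → ℝ} {l : ℝ}

lemma le_of_convexOn_of_log_one_add_mul_eq (hg : ConvexOn ℝ univ g) (hl0 : 0 ≤ l) (hl1 : l ≤ 1)
    {x v a c : ℝ} (ha : 0 ≤ a)
    (heq : log (1 + l * a) = ((x + l * v) ^ 2 - x ^ 2) / 2 - l * g (x + l * v) + c) :
    c ≤ l ^ 2 * (log (1 + a) + (x ^ 2 - (x + v) ^ 2) / 2 + g (x + v)) +
      l * (1 - l) * (g x + (a - x * v)) := by
  have hconv : g (x + l * v) ≤ l * g (x + v) + (1 - l) * g x := by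
    have := hg.2 (mem_univ (x + v)) (mem_univ x) hl0 (sub_nonneg.2 hl1) (add_sub_cancel l 1)
    rwa [smul_eq_mul, smul_eq_mul, show l * (x + v) + (1 - l) * x = x + l * v by ring] at this
  linarith [log_one_add_mul_le hl0 hl1 ha, mul_le_mul_of_nonneg_left hconv hl0]

lemma le_log_integral_exp_of_displacement (hg : ConvexOn ℝ univ g)
    (hexp : Integrable (fun x ↦ exp (g x)) (gaussianReal 0 1)) (hl0 : 0 ≤ l) (hl1 : l ≤ 1)
    {v v' : ℝ → ℝ} {c : ℝ} (hv : ∀ x, HasDerivAt v (v' x) x) (hv' : ∀ x, 0 ≤ v' x)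
    (hvint : Integrable v (gaussianReal 0 1))
    (heq : ∀ x, log (1 + l * v' x) =
      ((x + l * v x) ^ 2 - x ^ 2) / 2 - l * g (x + l * v x) + c) :
    c ≤ l ^ 2 * log (∫ x, exp (g x) ∂gaussianReal 0 1) +
      l * (1 - l) * ∫ x, g x ∂gaussianReal 0 1 := by
  set Z := ∫ x, exp (g x) ∂gaussianReal 0 1
  have hZ : 0 < Z := integral_exp_pos hexp
  have hgint := integrable_gaussianReal_of_convexOn hg hexp
  let J (x : ℝ) : ℝ := (1 + v' x) * exp ((x ^ 2 - (x + v x) ^ 2) / 2) * exp (g (x + v x))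
  have hone_add : ∀ x, 0 < 1 + v' x := fun x ↦ by linarith [hv' x]
  have hR : ∀ x, HasDerivAt (fun x ↦ x + v x) (1 + v' x) x := fun x ↦ (hasDerivAt_id x).add (hv x)
  have hR_mono := (strictMono_of_hasDerivAt_pos hR hone_add).monotone
  have hJint : Integrable J (gaussianReal 0 1) :=
    integrable_gaussianReal_deriv_mul_exp_mul_comp hR hR_mono hexp
  have hJle : ∫ x, J x ∂gaussianReal 0 1 ≤ Z :=
    integral_gaussianReal_deriv_mul_exp_mul_comp_le hR hR_mono hexp fun x ↦ (exp_pos _).le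
  have hlogJ : ∀ x, log (1 + v' x) + (x ^ 2 - (x + v x) ^ 2) / 2 + g (x + v x) ≤
      J x / Z - 1 + log Z := fun x ↦ log_add_add_le_mul_exp_mul_exp_div (hone_add x) hZ _ _
  have hstein : ∫ x, (c - l ^ 2 * (J x / Z - 1 + log Z) - l * (1 - l) * g x) ∂gaussianReal 0 1
      ≤ 0 := by
    refine integral_gaussianReal_nonpos_of_le_deriv_sub_mul
      (fun x ↦ (hv x).const_mul (l * (1 - l))) (by fun_prop) (hvint.const_mul _) fun x ↦ ?_
    linarith [le_of_convexOn_of_log_one_add_mul_eq hg hl0 hl1 (hv' x) (heq x),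
      mul_le_mul_of_nonneg_left (hlogJ x) (sq_nonneg l)]
  have hratio : (∫ x, J x ∂gaussianReal 0 1) / Z ≤ 1 := (div_le_one hZ).2 hJle
  rw [integral_sub (by fun_prop) (by fun_prop), integral_sub (by fun_prop) (by fun_prop),
    integral_const_mul, integral_const_mul, integral_add (by fun_prop) (by fun_prop),
    integral_sub (by fun_prop) (by fun_prop), integral_div] at hstein
  simp only [integral_const, probReal_univ, one_smul] at hstein
  linarith [mul_le_mul_of_nonneg_left hratio (sq_nonneg l)]

lemma log_integral_gaussianReal_zero_one_exp_mul_le_of_convexOn (hg : ConvexOn ℝ univ g)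
    (hexp : Integrable (fun x ↦ exp (g x)) (gaussianReal 0 1)) (hl0 : 0 < l) (hl1 : l < 1) :
    log (∫ x, exp (l * g x) ∂gaussianReal 0 1) ≤
      l ^ 2 * log (∫ x, exp (g x) ∂gaussianReal 0 1) +
        l * (1 - l) * ∫ x, g x ∂gaussianReal 0 1 := by
  have hlg : ConvexOn ℝ univ fun x ↦ l * g x := hg.smul hl0.le
  have hlg_cont : Continuous fun x ↦ l * g x := continuous_of_convexOn_univ hlg
  have hexp_l : Integrable (fun x ↦ exp (l * g x)) (gaussianReal 0 1) :=
    integrable_exp_mul_of_nonneg_of_le (u := 1) (by simpa using hexp) hl0.le hl1.le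
  let T := gaussianTiltTransport fun x ↦ l * g x
  have hT : ∀ x, HasDerivAt T (exp ((T x ^ 2 - x ^ 2) / 2 - l * g (T x) +
      log (∫ y, exp (l * g y) ∂gaussianReal 0 1))) x :=
    hasDerivAt_gaussianTiltTransport hlg_cont hexp_l
  have hT' : ∀ x, 1 ≤ deriv T x := one_le_deriv_gaussianTiltTransport hlg hexp_l
  have hTint : Integrable T (gaussianReal 0 1) :=
    integrable_gaussianTiltTransport hlg_cont hexp_l
      (integrable_exp_mul_mul_id_gaussianReal hl0.le hl1 hexp)
  have hid : Integrable (fun x : ℝ ↦ x) (gaussianReal 0 1) :=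
    memLp_one_iff_integrable.1 (memLp_id_gaussianReal 1)
  refine le_log_integral_exp_of_displacement hg hexp hl0.le hl1.le
    (v := fun x ↦ (T x - x) / l) (v' := fun x ↦ (deriv T x - 1) / l)
    (fun x ↦ ((hT x).differentiableAt.hasDerivAt.sub (hasDerivAt_id x)).div_const l)
    (fun x ↦ div_nonneg (sub_nonneg.2 (hT' x)) hl0.le) ((hTint.sub hid).div_const l) fun x ↦ ?_
  rw [mul_div_cancel₀ _ hl0.ne', mul_div_cancel₀ _ hl0.ne', add_sub_cancel, add_sub_cancel,
    (hT x).deriv, log_exp]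

lemma log_integral_gaussianReal_exp_mul_le_of_convexOn (hg : ConvexOn ℝ univ g) {μ : ℝ}
    {v : NNReal} (hexp : Integrable (fun x ↦ exp (g x)) (gaussianReal μ v))
    (hl0 : 0 < l) (hl1 : l < 1) :
    log (∫ x, exp (l * g x) ∂gaussianReal μ v) ≤
      l ^ 2 * log (∫ x, exp (g x) ∂gaussianReal μ v) +
        l * (1 - l) * ∫ x, g x ∂gaussianReal μ v := by
  have hcont : Continuous g := continuous_of_convexOn_univ hg
  have haffine : Continuous fun z : ℝ ↦ μ + √v * z := by fun_prop
  have hg_affine : ConvexOn ℝ univ fun z ↦ g (μ + √v * z) := by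
    simpa [Function.comp_def] using
      hg.comp_affineMap (AffineMap.const ℝ ℝ μ + √v • AffineMap.id ℝ ℝ)
  rw [gaussianReal_eq_map_gaussianReal_zero_one] at hexp ⊢
  rw [integral_map haffine.aemeasurable (by fun_prop),
    integral_map haffine.aemeasurable (by fun_prop),
    integral_map haffine.aemeasurable (by fun_prop)]
  exact log_integral_gaussianReal_zero_one_exp_mul_le_of_convexOn hg_affine
    (hexp.comp_measurable haffine.measurable) hl0 hl1

end Interpolation

theorem mgf_interpolation_bound_general {g : ℝ → ℝ} (hg : ConvexOn ℝ univ g) {μ : ℝ} {v : NNReal}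
    (hexp : Integrable (fun x ↦ exp (g x)) (gaussianReal μ v)) {l : ℝ} (hl : l ∈ Icc 0 1) :
    ∫ x, exp (l * g x) ∂gaussianReal μ v ≤
      (∫ x, exp (g x) ∂gaussianReal μ v) ^ (l ^ 2) *
        exp (l * (1 - l) * ∫ x, g x ∂gaussianReal μ v) := by
  rcases hl.1.eq_or_lt with rfl | hl0
  · simp
  rcases hl.2.eq_or_lt with rfl | hl1
  · simp
  have hlog := log_integral_gaussianReal_exp_mul_le_of_convexOn hg hexp hl0 hl1
  have hexp_l : Integrable (fun x ↦ exp (l * g x)) (gaussianReal μ v) :=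
    integrable_exp_mul_of_nonneg_of_le (u := 1) (by simpa using hexp) hl0.le hl1.le
  rwa [rpow_def_of_pos (integral_exp_pos hexp), ← exp_add,
    ← log_le_iff_le_exp (integral_exp_pos hexp_l), mul_comm (log _)]

/-- For `η = Φ (h + σ z)` and `λ ∈ [0,1]`,
`E[exp (λ η)] ≤ (E[exp η])^(λ²) * exp (λ (1 - λ) E[η])`. -/
theorem mgf_interpolation_bound
    (Φ : ℝ → ℝ) (hΦsmooth : ContDiff ℝ (⊤ : ℕ∞) Φ)
    (hΦconv : ConvexOn ℝ Set.univ Φ)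
    (hΦsymm : ∀ x, Φ (-x) = Φ x) (hΦ0 : Φ 0 = 0)
    (h σ : ℝ) (hσ : 0 < σ)
    (hint : ∀ m : ℝ, 0 ≤ m →
      Integrable (fun z => Real.exp (m * Φ (h + σ * z))) (gaussianReal 0 1))
    (hint1 : Integrable (fun z => Φ (h + σ * z)) (gaussianReal 0 1)) :
    ∀ l : ℝ, l ∈ Set.Icc (0 : ℝ) 1 →
      (∫ z, Real.exp (l * Φ (h + σ * z)) ∂(gaussianReal 0 1))
        ≤ (∫ z, Real.exp (Φ (h + σ * z)) ∂(gaussianReal 0 1)) ^ (l ^ 2)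
            * Real.exp (l * (1 - l) * ∫ z, Φ (h + σ * z) ∂(gaussianReal 0 1)) :=
  fun _ hl ↦ mgf_interpolation_bound_general
    (by simpa [Function.comp_def] using
      hΦconv.comp_affineMap ((AffineMap.const ℝ ℝ h) + σ • AffineMap.id ℝ ℝ))
    (by simpa using hint 1 zero_le_one) hl
end

section
/- If f : ℝ → ℝ is odd (f(-x) = -f(x)) and nonnegative on [0,∞), then g(x) = E[V(x,z) f(x+z)] is odd and nonnegative on [0,∞), where V(x,z) = exp(m(Φ̃(x+z) - ψ(x))) is the Gibbs change of density associated with a convex symmetric Φ̃. -/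
open MeasureTheory ProbabilityTheory Real

/-! Since `Φ` is even, so is `ψ`, hence `V (-x) (-z) = V x z`, and `g` is odd because the law of `z`
is symmetric. For `x ≥ 0` write `g x = ∫ h dν`, where `ν` is the law of `x + z` and
`h y = exp (m (Φ y - ψ x)) f y` is odd and nonnegative on `[0, ∞)`. Folding the negative half-line
onto the positive one turns this integral into `∫_{y > 0} h dν - ∫_{y > 0} h dν⁻`, where `ν⁻` is the
reflection of `ν`. On `(0, ∞)` the reflection is dominated by `ν`, because a Gaussian with mean
`x ≥ 0` is more likely to be near `y > 0` than near `-y`. -/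

open Set

section SymmetricMeasure

variable {G E : Type*} [AddCommGroup G] [MeasurableSpace G] [MeasurableNeg G]
  [NormedAddCommGroup E] [NormedSpace ℝ E] (μ : Measure G) [μ.IsNegInvariant]

theorem integral_comp_neg_add (F : G → E) (x : G) :
    ∫ z, F (-x + z) ∂μ = ∫ z, F (-(x + z)) ∂μ := by
  simpa only [neg_add] using (integral_neg_eq_self (fun z => F (-x + z)) μ).symm

theorem even_integral_comp_add {F : G → E} (hF : F.Even) :
    Function.Even fun x => ∫ z, F (x + z) ∂μ := fun x => by
  simp only [integral_comp_neg_add, hF.eq]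

end SymmetricMeasure

/-- `ν` is tilted to the right: it gives every measurable subset of `(0, ∞)` at least the mass of
the mirror image of that set. -/
def RightDominant (ν : Measure ℝ) : Prop :=
  ν.neg.restrict (Ioi 0) ≤ ν.restrict (Ioi 0)

theorem odd_eq_indicator_Ioi_sub {α E : Type*} [AddCommGroup α] [LinearOrder α]
    [IsOrderedAddMonoid α] [AddCommGroup E] [IsAddTorsionFree E] {h : α → E} (hodd : h.Odd)
    (x : α) : h x = (Ioi 0).indicator h x - (Ioi 0).indicator h (-x) := by
  rcases lt_trichotomy x 0 with hx | rfl | hx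
  · simp [hx, hx.le, hodd.eq]
  · simp [hodd.map_zero]
  · simp [hx, hx.le]

theorem integral_eq_setIntegral_Ioi_sub_of_odd {E : Type*} [NormedAddCommGroup E]
    [NormedSpace ℝ E] {ν : Measure ℝ} {h : ℝ → E} (hodd : h.Odd) (hint : Integrable h ν) :
    ∫ x, h x ∂ν = ∫ x in Ioi 0, h x ∂ν - ∫ x in Ioi 0, h x ∂ν.neg := by
  have hpart : Integrable ((Ioi 0).indicator h) ν := hint.indicator measurableSet_Ioi
  have hfold : ∫ x, (Ioi 0).indicator h (-x) ∂ν = ∫ x in Ioi 0, h x ∂ν.neg := by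
    rw [← integral_indicator measurableSet_Ioi]
    exact (measurableEmbedding_neg.integral_map _).symm
  have hpart_neg : Integrable (fun x => (Ioi 0).indicator h (-x)) ν := by
    have hreflect := hint.neg.indicator (measurableSet_Iio (a := (0 : ℝ)))
    refine hreflect.congr (.of_forall fun x => ?_)
    by_cases hx : x < 0 <;> simp [hx, hodd.eq]
  have : IsAddTorsionFree E := .of_isTorsionFree ℝ E
  calc ∫ x, h x ∂ν = ∫ x, ((Ioi 0).indicator h x - (Ioi 0).indicator h (-x)) ∂ν := by
        simp only [← odd_eq_indicator_Ioi_sub hodd]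
    _ = ∫ x in Ioi 0, h x ∂ν - ∫ x in Ioi 0, h x ∂ν.neg := by
        rw [integral_sub hpart hpart_neg, integral_indicator measurableSet_Ioi, hfold]

theorem RightDominant.integral_nonneg_of_odd {ν : Measure ℝ} (hν : RightDominant ν) {h : ℝ → ℝ}
    (hodd : h.Odd) (hpos : ∀ x, 0 < x → 0 ≤ h x) (hint : Integrable h ν) :
    0 ≤ ∫ x, h x ∂ν := by
  have hpos_ae : 0 ≤ᵐ[ν.restrict (Ioi 0)] h :=
    ae_restrict_of_forall_mem measurableSet_Ioi hpos
  rw [integral_eq_setIntegral_Ioi_sub_of_odd hodd hint, sub_nonneg]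
  exact integral_mono_measure hν hpos_ae hint.restrict

theorem neg_gaussianReal (x : ℝ) (v : NNReal) : (gaussianReal x v).neg = gaussianReal (-x) v :=
  gaussianReal_map_neg

instance isNegInvariant_gaussianReal_zero (v : NNReal) : (gaussianReal 0 v).IsNegInvariant :=
  ⟨by simpa only [neg_zero] using neg_gaussianReal 0 v⟩

theorem gaussianPDF_neg_mean_le {x y : ℝ} (hxy : 0 ≤ x * y) (v : NNReal) :
    gaussianPDF (-x) v y ≤ gaussianPDF x v y := by
  have hsq : (y - x) ^ 2 ≤ (y - -x) ^ 2 := by linarith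
  unfold gaussianPDF gaussianPDFReal
  gcongr

theorem rightDominant_gaussianReal {x : ℝ} (hx : 0 ≤ x) (v : NNReal) :
    RightDominant (gaussianReal x v) := by
  rw [RightDominant, neg_gaussianReal]
  rcases eq_or_ne v 0 with rfl | hv
  · have hdirac : (Measure.dirac (-x)).restrict (Ioi 0) = 0 := by
      simp [Measure.restrict_eq_zero, hx]
    simp only [gaussianReal_zero_var, hdirac, Measure.zero_le]
  · rw [gaussianReal_of_var_ne_zero _ hv, gaussianReal_of_var_ne_zero _ hv,
      restrict_withDensity measurableSet_Ioi, restrict_withDensity measurableSet_Ioi]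
    exact withDensity_mono <| ae_restrict_of_forall_mem measurableSet_Ioi fun y hy =>
      gaussianPDF_neg_mean_le (mul_nonneg hx (mem_Ioi.1 hy).le) v

theorem gibbs_preserves_odd_nonneg_general
    (Φ : ℝ → ℝ) (hΦ : Φ.Even)
    (μ : Measure ℝ) [μ.IsNegInvariant] (hμ : ∀ x, 0 ≤ x → RightDominant (μ.map (x + ·)))
    (m : ℝ) (f : ℝ → ℝ) (hfodd : f.Odd) (hfnonneg : ∀ x, 0 ≤ x → 0 ≤ f x)
    (ψ : ℝ → ℝ) (hψ : ∀ x, ψ x = (1 / m) * log (∫ z, exp (m * Φ (x + z)) ∂μ))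
    (V : ℝ → ℝ → ℝ) (hV : ∀ x z, V x z = exp (m * (Φ (x + z) - ψ x)))
    (hint : ∀ x, Integrable (fun z => V x z * f (x + z)) μ)
    (g : ℝ → ℝ) (hg : ∀ x, g x = ∫ z, V x z * f (x + z) ∂μ) :
    g.Odd ∧ ∀ x, 0 ≤ x → 0 ≤ g x := by
  simp only [hV] at hint hg
  have hψeven : ψ.Even := by
    rw [funext hψ]
    exact (even_integral_comp_add μ (hΦ.left_comp fun t => exp (m * t))).left_comp
      fun t => 1 / m * log t
  let h (x y : ℝ) : ℝ := exp (m * (Φ y - ψ x)) * f y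
  have hodd (x : ℝ) : (h x).Odd := fun y => by simp only [h, hΦ.eq, hfodd.eq, mul_neg]
  have hnonneg (x y : ℝ) (hy : 0 ≤ y) : 0 ≤ h x y := mul_nonneg (exp_pos _).le (hfnonneg y hy)
  constructor
  · intro x
    calc g (-x) = ∫ z, h x (-x + z) ∂μ := by rw [hg, hψeven.eq]
      _ = ∫ z, h x (-(x + z)) ∂μ := integral_comp_neg_add μ (h x) x
      _ = -g x := by simp only [(hodd x).eq, integral_neg, hg, h]
  · intro x hx
    have hshift := measurableEmbedding_addLeft x
    rw [hg, ← hshift.integral_map (h x)]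
    exact (hμ x hx).integral_nonneg_of_odd (hodd x) (fun y hy => hnonneg x y hy.le)
      (hshift.integrable_map_iff.2 (hint x))

/-- Lemma 2(c): if `f` is odd and nonnegative on `[0,∞)`, then
`g(x) = E[V(x,z) f(x+z)]` is odd and nonnegative on `[0,∞)`. -/
theorem gibbs_preserves_odd_nonneg
    (Φ : ℝ → ℝ) (hΦsmooth : ContDiff ℝ (⊤ : ℕ∞) Φ)
    (hΦconv : ConvexOn ℝ Set.univ Φ)
    (hΦsymm : ∀ x, Φ (-x) = Φ x) (hΦnonneg : ∀ x, 0 ≤ Φ x)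
    (σ2 : NNReal) (hσ2 : 0 < σ2) (m : ℝ) (hm : 0 ≤ m)
    (f : ℝ → ℝ) (hfodd : ∀ x, f (-x) = -f x) (hfnonneg : ∀ x, 0 ≤ x → 0 ≤ f x)
    (ψ : ℝ → ℝ)
    (hψ : ∀ x, ψ x = (1 / m) *
      Real.log (∫ z, Real.exp (m * Φ (x + z)) ∂(gaussianReal 0 σ2)))
    (V : ℝ → ℝ → ℝ)
    (hV : ∀ x z, V x z = Real.exp (m * (Φ (x + z) - ψ x)))
    (hint : ∀ x, Integrable (fun z => V x z * f (x + z)) (gaussianReal 0 σ2))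
    (g : ℝ → ℝ)
    (hg : ∀ x, g x = ∫ z, V x z * f (x + z) ∂(gaussianReal 0 σ2)) :
    (∀ x, g (-x) = -g x) ∧ (∀ x, 0 ≤ x → 0 ≤ g x) := by
  exact gibbs_preserves_odd_nonneg_general Φ hΦsymm (gaussianReal 0 σ2)
    (fun x hx => by simpa only [gaussianReal_map_const_add, zero_add] using
      rightDominant_gaussianReal hx σ2) m f hfodd hfnonneg ψ hψ V hV hint g hg
end

section
/- The function f(x) = E[V(x,z) log V(x,z)] is in 𝒞, i.e., it is nonnegative, even, and nondecreasing on [0,∞), where V(x,z) = exp(m(Φ̃(x+z) - ψ(x))) is the Gibbs change of density associated with a convex symmetric nonnegative Φ̃. -/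
open MeasureTheory ProbabilityTheory Real

/-!
Write `γ_x` for the law of `x + z`, put `L = m Φ̃` and let `Q_x ∝ exp L • γ_x` be the Gibbs measure.
Then `f(x) = ∫ L dQ_x - log ∫ exp L dγ_x` is the relative entropy of `Q_x` with respect to `γ_x`,
and differentiating in `x` gives `f'(x) = Cov_{Q_x}(L, L')`. Here `L` is even and `L'` is odd. Since
`L` is even, under `Q_x` as under `γ_x` the sign of `y` given `|y|` has mean `tanh(x|y|/σ²)`, so
against even functions `L'(y)` integrates like the even function `L'(y) tanh(xy/σ²)`. For `x ≥ 0`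
both this function and `L` are nondecreasing in `|y|`, and Chebyshev's association inequality gives
`f' ≥ 0`. A convex `L` is differentiable almost everywhere, which is all the argument needs.
-/

section ExpConvex

variable {E : Type*} [AddCommGroup E] [Module ℝ E] {s : Set E} {F : E → ℝ}

lemma convexOn_exp_comp (hF : ConvexOn ℝ s F) : ConvexOn ℝ s fun y => exp (F y) :=
  ⟨hF.1, fun _ hx _ hy _ _ ha hb hab => (exp_le_exp.2 (hF.2 hx hy ha hb hab)).trans
    (convexOn_exp.2 trivial trivial ha hb hab)⟩

lemma convexOn_exp_comp_mul_self (hF : ConvexOn ℝ s F) (hF_nonneg : ∀ y ∈ s, 0 ≤ F y) :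
    ConvexOn ℝ s fun y => exp (F y) * F y :=
  (convexOn_exp_comp hF).mul hF (fun _ _ => (exp_pos _).le) hF_nonneg
    fun _ _ _ _ h => exp_le_exp.2 h.le

end ExpConvex

section Convex

variable {F : ℝ → ℝ}

lemma abs_le_of_convexOn_univ (hF : ConvexOn ℝ Set.univ F) {c r y : ℝ} (hy : |y - c| ≤ r) :
    |F y| ≤ |F (c - r)| + |F (c + r)| + 2 * |F c| := by
  obtain ⟨hl, hr⟩ := abs_le.1 hy
  have upper : F y ≤ max (F (c - r)) (F (c + r)) :=
    hF.le_max_of_mem_Icc (Set.mem_univ _) (Set.mem_univ _) ⟨by linarith, by linarith⟩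
  have upper_reflected : F (2 * c - y) ≤ max (F (c - r)) (F (c + r)) :=
    hF.le_max_of_mem_Icc (Set.mem_univ _) (Set.mem_univ _) ⟨by linarith, by linarith⟩
  have midpoint : F c ≤ (1 / 2) * F y + (1 / 2) * F (2 * c - y) := by
    have h := hF.2 (Set.mem_univ y) (Set.mem_univ (2 * c - y)) (by norm_num : (0 : ℝ) ≤ 1 / 2)
      (by norm_num : (0 : ℝ) ≤ 1 / 2) (by norm_num)
    simp only [smul_eq_mul] at h
    rwa [show 1 / 2 * y + 1 / 2 * (2 * c - y) = c by ring] at h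
  have max_le : max (F (c - r)) (F (c + r)) ≤ |F (c - r)| + |F (c + r)| :=
    max_le (by linarith [le_abs_self (F (c - r)), abs_nonneg (F (c + r))])
      (by linarith [le_abs_self (F (c + r)), abs_nonneg (F (c - r))])
  exact abs_le.2 ⟨by linarith [neg_abs_le (F c)], by linarith [abs_nonneg (F c)]⟩

lemma lipschitzOnWith_ball_of_convexOn_univ (hF : ConvexOn ℝ Set.univ F) (c : ℝ) :
    LipschitzOnWith (Real.nnabs (2 * (|F (c - 2)| + |F (c + 2)| + 2 * |F c|))) F
      (Metric.ball c 1) := by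
  have h := (hF.subset (Set.subset_univ (Metric.ball c 2))
    (convex_ball c 2)).lipschitzOnWith_of_abs_le one_pos
    fun y hy => abs_le_of_convexOn_univ hF (Real.dist_eq y c ▸ hy.le)
  rwa [div_one, ← Real.nnabs_of_nonneg (by positivity), show (2 : ℝ) - 1 = 1 by norm_num] at h

lemma ae_differentiableAt_of_convexOn_univ (hF : ConvexOn ℝ Set.univ F) :
    ∀ᵐ y, DifferentiableAt ℝ F y := by
  refine LocallyBoundedVariationOn.ae_differentiableAt fun a b _ _ => ?_
  obtain ⟨K, hK⟩ := LocallyLipschitzOn.exists_lipschitzOnWith_of_compact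
    (isCompact_uIcc (a := a) (b := b)) hF.locallyLipschitz.locallyLipschitzOn
  exact (hK.locallyBoundedVariationOn a b Set.left_mem_uIcc Set.right_mem_uIcc).mono
    fun y hy => ⟨Set.Icc_subset_uIcc hy.2, hy.2⟩

lemma hasDerivAt_integral_comp_add_of_convexOn {F' : ℝ → ℝ} {μ : Measure ℝ}
    (hF : ConvexOn ℝ Set.univ F) (hint : ∀ x, Integrable (fun z => F (x + z)) μ) {x : ℝ}
    (hF' : ∀ᵐ z ∂μ, HasDerivAt F (F' (x + z)) (x + z)) :
    Integrable (fun z => F' (x + z)) μ ∧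
      HasDerivAt (fun x => ∫ z, F (x + z) ∂μ) (∫ z, F' (x + z) ∂μ) x := by
  have hF'_meas : AEStronglyMeasurable (fun z => F' (x + z)) μ := by
    refine ((measurable_deriv F).comp (measurable_const_add x)).aestronglyMeasurable.congr ?_
    filter_upwards [hF'] with z hz using hz.deriv
  refine hasDerivAt_integral_of_dominated_loc_of_lip (F := fun x z => F (x + z))
    (bound := fun z => 2 * (|F (x - 2 + z)| + |F (x + 2 + z)| + 2 * |F (x + z)|))
    (Metric.ball_mem_nhds x one_pos) (.of_forall fun x => (hint x).aestronglyMeasurable) (hint x)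
    hF'_meas (.of_forall fun z => ?_) ?_ ?_
  · exact lipschitzOnWith_ball_of_convexOn_univ (F := fun y => F (y + z))
      (by simpa [Function.comp_def] using hF.translate_left z) x
  · exact (((hint _).abs.add (hint _).abs).add ((hint x).abs.const_mul 2)).const_mul 2
  · filter_upwards [hF'] with z hz using hz.comp_add_const x z

end Convex

section Even

variable {α β γ : Type*} [AddCommGroup α] [LinearOrder α]

lemma apply_abs_of_even_s9 {F : α → β} (hF : F.Even) (y : α) : F |y| = F y := by
  rcases abs_choice y with h | h <;> simp only [h, hF.eq]

lemma monovary_of_even_of_monotoneOn [IsOrderedAddMonoid α] [LinearOrder β] [LinearOrder γ]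
    {F : α → β} {G : α → γ} (hF : F.Even) (hG : G.Even)
    (hF_mono : MonotoneOn F (Set.Ici 0)) (hG_mono : MonotoneOn G (Set.Ici 0)) : Monovary F G := by
  intro y z hyz
  rw [← apply_abs_of_even_s9 hG y, ← apply_abs_of_even_s9 hG z] at hyz
  rw [← apply_abs_of_even_s9 hF y, ← apply_abs_of_even_s9 hF z]
  exact hF_mono (abs_nonneg y) (abs_nonneg z)
    (hG_mono.reflect_lt (abs_nonneg y) (abs_nonneg z) hyz).le

end Even

section ConvexEven

variable {F : ℝ → ℝ}

lemma monotoneOn_Ici_of_convexOn_of_even (hF : ConvexOn ℝ Set.univ F) (hF_even : F.Even) :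
    MonotoneOn F (Set.Ici 0) := fun a ha b _ hab => by
  simpa [hF_even.eq] using hF.le_max_of_mem_Icc (Set.mem_univ (-b)) (Set.mem_univ b)
    ⟨by linarith [Set.mem_Ici.1 ha], hab⟩

lemma exists_odd_monotone_ae_hasDerivAt (hF : ConvexOn ℝ Set.univ F) (hF_even : F.Even) :
    ∃ F' : ℝ → ℝ, F'.Odd ∧ Monotone F' ∧ ∀ᵐ y, HasDerivAt F (F' y) y := by
  set R : ℝ → ℝ := fun y => derivWithin F (Set.Ioi y) y
  have hR : Monotone R := by
    simpa [monotoneOn_univ] using hF.monotoneOn_rightDeriv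
  have hR_eq {y : ℝ} (hy : DifferentiableAt ℝ F y) : R y = deriv F y :=
    hy.derivWithin (uniqueDiffWithinAt_Ioi y)
  -- Antisymmetrizing the right derivative makes it odd everywhere, not only almost everywhere.
  refine ⟨fun y => (R y - R (-y)) / 2, fun y => ?_, fun y z hyz => ?_, ?_⟩
  · simp only [neg_neg]; ring
  · simp only
    linarith [hR hyz, hR (neg_le_neg hyz)]
  · filter_upwards [ae_differentiableAt_of_convexOn_univ hF] with y hy
    have hy_neg : DifferentiableAt ℝ F (-y) := by
      rwa [differentiableAt_iff_comp_neg, funext hF_even, neg_neg]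
    have hderiv_neg : deriv F (-y) = -deriv F y := by
      rw [← neg_eq_iff_eq_neg, ← deriv_comp_neg, funext hF_even]
    have hF'_eq : (R y - R (-y)) / 2 = deriv F y := by
      rw [hR_eq hy, hR_eq hy_neg, hderiv_neg]; ring
    exact hF'_eq ▸ hy.hasDerivAt

end ConvexEven

lemma monotone_tanh : Monotone tanh := fun a b hab =>
  (artanh_le_artanh_iff ⟨neg_one_lt_tanh a, tanh_lt_one a⟩ ⟨neg_one_lt_tanh b, tanh_lt_one b⟩).1
    (by simpa only [artanh_tanh] using hab)

lemma integrable_mul_tanh {α : Type*} [MeasurableSpace α] {μ : Measure α} {F G : α → ℝ}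
    (hF : Integrable F μ) (hG : AEMeasurable G μ) :
    Integrable (fun y => F y * tanh (G y)) μ :=
  hF.mul_bdd (monotone_tanh.measurable.comp_aemeasurable hG).aestronglyMeasurable
    (.of_forall fun y => (abs_tanh_lt_one (G y)).le)

lemma integral_mul_integral_le_of_monovary {α : Type*} [MeasurableSpace α] {μ : Measure α}
    [IsProbabilityMeasure μ] {F G : α → ℝ} (hFG : Monovary F G) (hF : Integrable F μ)
    (hG : Integrable G μ) (hFG_int : Integrable (fun y => F y * G y) μ) :
    (∫ y, F y ∂μ) * ∫ y, G y ∂μ ≤ ∫ y, F y * G y ∂μ := by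
  have h_nonneg : 0 ≤ ∫ p, (F p.2 - F p.1) * (G p.2 - G p.1) ∂μ.prod μ :=
    integral_nonneg fun p => monovary_iff_forall_smul_nonneg.1 hFG p.1 p.2
  have h_same : Integrable (fun p : α × α => F p.1 * G p.1 + F p.2 * G p.2) (μ.prod μ) :=
    (hFG_int.comp_fst μ).add (hFG_int.comp_snd μ)
  have h_cross : Integrable (fun p : α × α => F p.1 * G p.2 + G p.1 * F p.2) (μ.prod μ) :=
    (hF.mul_prod hG).add (hG.mul_prod hF)
  have h_expand : ∫ p, (F p.2 - F p.1) * (G p.2 - G p.1) ∂μ.prod μ =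
      2 * (∫ y, F y * G y ∂μ) - 2 * ((∫ y, F y ∂μ) * ∫ y, G y ∂μ) := by
    calc _ = ∫ p, (F p.1 * G p.1 + F p.2 * G p.2) - (F p.1 * G p.2 + G p.1 * F p.2) ∂μ.prod μ := by
          congr with p; ring
      _ = _ := by
          rw [integral_sub h_same h_cross,
            integral_add (hFG_int.comp_fst μ) (hFG_int.comp_snd μ),
            integral_add (hF.mul_prod hG) (hG.mul_prod hF), integral_prod_mul, integral_prod_mul,
            integral_fun_fst (fun y => F y * G y), integral_fun_snd (fun y => F y * G y)]
          simp only [probReal_univ, one_smul]; ring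
  linarith

lemma integral_tilted_eq_div {α : Type*} [MeasurableSpace α] {μ : Measure α} {L : α → ℝ}
    (G : α → ℝ) :
    ∫ y, G y ∂μ.tilted L = (∫ y, exp (L y) * G y ∂μ) / ∫ y, exp (L y) ∂μ := by
  rw [integral_tilted, ← integral_div]
  congr with y
  rw [smul_eq_mul, div_mul_eq_mul_div]

section Gaussian

variable {v : NNReal} {F L B : ℝ → ℝ}

lemma measurePreserving_const_add_gaussianReal (x : ℝ) (v : NNReal) :
    MeasurePreserving (x + ·) (gaussianReal 0 v) (gaussianReal x v) :=
  ⟨measurable_const_add x, by simp only [gaussianReal_map_const_add, zero_add]⟩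

lemma hasDerivAt_integral_gaussianReal_of_convexOn {F' : ℝ → ℝ} (hv : v ≠ 0)
    (hF : ConvexOn ℝ Set.univ F) (hF' : ∀ᵐ y, HasDerivAt F (F' y) y)
    (hint : ∀ x, Integrable F (gaussianReal x v)) (x : ℝ) :
    Integrable F' (gaussianReal x v) ∧
      HasDerivAt (fun x => ∫ y, F y ∂gaussianReal x v) (∫ y, F' y ∂gaussianReal x v) x := by
  have shift (x : ℝ) := measurePreserving_const_add_gaussianReal x v
  have h := hasDerivAt_integral_comp_add_of_convexOn hF (x := x)
    (fun x => ((shift x).integrable_comp_emb (measurableEmbedding_addLeft x)).2 (hint x))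
    ((shift x).quasiMeasurePreserving.ae ((gaussianReal_absolutelyContinuous x hv).ae_le hF'))
  simp only [(shift _).integral_comp (measurableEmbedding_addLeft _)] at h
  exact ⟨((shift x).integrable_comp_emb (measurableEmbedding_addLeft x)).1 h.1, h.2⟩

lemma gaussianPDFReal_mul_one_sub_tanh (hv : v ≠ 0) (x y : ℝ) :
    gaussianPDFReal x v y * (1 - tanh (x * y / v)) =
      (√(2 * π * v))⁻¹ * exp (-(y ^ 2 + x ^ 2) / (2 * v)) / cosh (x * y / v) := by
  have hv' : (v : ℝ) ≠ 0 := NNReal.coe_ne_zero.2 hv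
  have h_exp : exp (-(y - x) ^ 2 / (2 * v)) * exp (-(x * y / v)) =
      exp (-(y ^ 2 + x ^ 2) / (2 * v)) := by
    rw [← exp_add]; congr 1; field_simp; ring
  have h_tanh : 1 - tanh (x * y / v) = exp (-(x * y / v)) / cosh (x * y / v) := by
    rw [tanh_eq_sinh_div_cosh, ← cosh_sub_sinh, sub_div, div_self (cosh_pos _).ne']
  rw [gaussianPDFReal, h_tanh, ← h_exp]; ring

lemma integral_gaussianReal_eq_integral_mul_tanh (hv : v ≠ 0) (hB : B.Odd) {x : ℝ}
    (hint : Integrable B (gaussianReal x v)) :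
    ∫ y, B y ∂gaussianReal x v = ∫ y, B y * tanh (x * y / v) ∂gaussianReal x v := by
  rw [← sub_eq_zero, ← integral_sub hint (integrable_mul_tanh hint (by fun_prop)),
    integral_gaussianReal_eq_integral_smul hv]
  set K : ℝ → ℝ := fun y => gaussianPDFReal x v y * (1 - tanh (x * y / v)) with hK
  have hK_even : K.Even := fun y => by
    simp only [hK, gaussianPDFReal_mul_one_sub_tanh hv, neg_sq, mul_neg, neg_div, cosh_neg]
  have h_odd : ∫ y, K y * B y = -∫ y, K y * B y := by
    rw [← integral_neg, ← integral_neg_eq_self]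
    simp only [hK_even.eq, hB.eq, mul_neg]
  calc _ = ∫ y, K y * B y := by congr with y; simp only [hK, smul_eq_mul]; ring
    _ = 0 := by linarith

lemma integral_tilted_gaussianReal_eq_integral_mul_tanh (hv : v ≠ 0) (hL : L.Even) (hB : B.Odd)
    {x : ℝ} (hexp : Integrable (fun y => exp (L y)) (gaussianReal x v))
    (hint : Integrable B ((gaussianReal x v).tilted L)) :
    ∫ y, B y ∂(gaussianReal x v).tilted L =
      ∫ y, B y * tanh (x * y / v) ∂(gaussianReal x v).tilted L := by
  have hodd : Function.Odd fun y => exp (L y) * B y := fun y => by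
    simp only [hL.eq, hB.eq, mul_neg]
  rw [integral_tilted_eq_div, integral_tilted_eq_div,
    integral_gaussianReal_eq_integral_mul_tanh hv hodd ((integrable_tilted_iff hexp B).1 hint)]
  simp only [mul_assoc]

lemma integral_mul_integral_le_tilted_gaussianReal_of_even_of_odd {A : ℝ → ℝ} (hv : v ≠ 0)
    (hL : L.Even) (hA : A.Even) (hA_mono : MonotoneOn A (Set.Ici 0)) (hB : B.Odd)
    (hB_mono : Monotone B) {x : ℝ} (hx : 0 ≤ x)
    (hexp : Integrable (fun y => exp (L y)) (gaussianReal x v))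
    (hA_int : Integrable A ((gaussianReal x v).tilted L))
    (hB_int : Integrable B ((gaussianReal x v).tilted L))
    (hAB_int : Integrable (fun y => A y * B y) ((gaussianReal x v).tilted L)) :
    (∫ y, A y ∂(gaussianReal x v).tilted L) * ∫ y, B y ∂(gaussianReal x v).tilted L ≤
      ∫ y, A y * B y ∂(gaussianReal x v).tilted L := by
  have := isProbabilityMeasure_tilted hexp
  have hAB : Function.Odd fun y => A y * B y := fun y => by simp only [hA.eq, hB.eq, mul_neg]
  rw [integral_tilted_gaussianReal_eq_integral_mul_tanh hv hL hB hexp hB_int,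
    integral_tilted_gaussianReal_eq_integral_mul_tanh hv hL hAB hexp hAB_int]
  set T : ℝ → ℝ := fun y => tanh (x * y / v) with hT
  have hT_mono : Monotone T := fun y z hyz => monotone_tanh (by gcongr)
  have hT_odd : T.Odd := fun y => by simp only [hT, mul_neg, neg_div, tanh_neg]
  have hBT : Function.Even fun y => B y * T y := fun y => by
    simp only [hB.eq, hT_odd.eq, neg_mul_neg]
  have nonneg_of_odd {G : ℝ → ℝ} (hG : G.Odd) (hG_mono : Monotone G) : ∀ y ∈ Set.Ici 0, 0 ≤ G y :=
    fun y hy => hG.map_zero ▸ hG_mono hy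
  have hBT_mono : MonotoneOn (fun y => B y * T y) (Set.Ici 0) :=
    (hB_mono.monotoneOn _).mul (hT_mono.monotoneOn _) (nonneg_of_odd hB hB_mono)
      (nonneg_of_odd hT_odd hT_mono)
  simpa only [mul_assoc] using integral_mul_integral_le_of_monovary
    (monovary_of_even_of_monotoneOn hA hBT hA_mono hBT_mono) hA_int
    (integrable_mul_tanh hB_int (by fun_prop))
    (by simpa only [mul_assoc] using integrable_mul_tanh hAB_int (by fun_prop))

end Gaussian

section Gibbs

variable {α β : Type*} [MeasurableSpace α] [MeasurableSpace β] {μ : Measure α} {L : α → ℝ}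

/-- The density of the Gibbs measure `μ.tilted L ∝ exp L • μ` with respect to `μ`, in the
exponential normalization `exp (L - log ∫ exp L ∂μ)`. -/
noncomputable def gibbsDensity (μ : Measure α) (L : α → ℝ) (z : α) : ℝ :=
  exp (L z - log (∫ w, exp (L w) ∂μ))

/-- The relative entropy `∫ V log V ∂μ` of the Gibbs measure with density `V = gibbsDensity μ L`.
The integral is `0` when `V log V` is not `μ`-integrable. -/
noncomputable def gibbsEntropy (μ : Measure α) (L : α → ℝ) : ℝ :=
  ∫ z, gibbsDensity μ L z * log (gibbsDensity μ L z) ∂μ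

lemma gibbsDensity_comp {ν : Measure β} {e : α → β} (he : MeasurePreserving e μ ν)
    (he_emb : MeasurableEmbedding e) (L : β → ℝ) (z : α) :
    gibbsDensity μ (fun w => L (e w)) z = gibbsDensity ν L (e z) := by
  simp only [gibbsDensity, he.integral_comp he_emb fun w => exp (L w)]

lemma gibbsEntropy_comp {ν : Measure β} {e : α → β} (he : MeasurePreserving e μ ν)
    (he_emb : MeasurableEmbedding e) (L : β → ℝ) :
    gibbsEntropy μ (fun w => L (e w)) = gibbsEntropy ν L := by
  rw [gibbsEntropy, gibbsEntropy, ← he.integral_comp he_emb]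
  simp only [gibbsDensity_comp he he_emb]

lemma integrable_exp_of_integrable_exp_mul_self [IsFiniteMeasure μ] (hL : AEMeasurable L μ)
    (h : Integrable (fun z => exp (L z) * L z) μ) : Integrable (fun z => exp (L z)) μ := by
  refine ((integrable_const 1).add h).mono' hL.exp.aestronglyMeasurable (.of_forall fun z => ?_)
  have h_le := self_sub_one_le_mul_log (exp_pos (L z)).le
  rw [log_exp] at h_le
  rw [norm_of_nonneg (exp_pos _).le, Pi.add_apply]
  linarith

lemma integrable_exp_mul_self_sub_const [IsFiniteMeasure μ] (hL : AEMeasurable L μ)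
    (h : Integrable (fun z => exp (L z) * L z) μ) (c : ℝ) :
    Integrable (fun z => exp (L z - c) * (L z - c)) μ := by
  have h_expand : (fun z => exp (L z - c) * (L z - c)) =
      fun z => exp (-c) * (exp (L z) * L z) - exp (-c) * c * exp (L z) := by
    ext z; rw [sub_eq_add_neg, exp_add]; ring
  rw [h_expand]
  exact (h.const_mul _).sub ((integrable_exp_of_integrable_exp_mul_self hL h).const_mul _)

lemma gibbsDensity_sub_const [NeZero μ] (hexp : Integrable (fun z => exp (L z)) μ) (c : ℝ) :
    gibbsDensity μ (fun z => L z - c) = gibbsDensity μ L := by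
  ext z
  simp only [gibbsDensity, exp_sub _ c, integral_div]
  rw [log_div (integral_exp_pos hexp).ne' (exp_pos c).ne', log_exp]
  congr 1; ring

lemma gibbsEntropy_sub_const [NeZero μ] (hexp : Integrable (fun z => exp (L z)) μ) (c : ℝ) :
    gibbsEntropy μ (fun z => L z - c) = gibbsEntropy μ L := by
  simp only [gibbsEntropy, gibbsDensity_sub_const hexp]

lemma gibbsDensity_eq_div [NeZero μ] (hexp : Integrable (fun z => exp (L z)) μ) (z : α) :
    gibbsDensity μ L z = exp (L z) / ∫ w, exp (L w) ∂μ := by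
  rw [gibbsDensity, exp_sub, exp_log (integral_exp_pos hexp)]

lemma gibbsEntropy_eq_integral_tilted_sub_log [NeZero μ]
    (hexp : Integrable (fun z => exp (L z)) μ) (hL : Integrable L (μ.tilted L)) :
    gibbsEntropy μ L = ∫ z, L z ∂μ.tilted L - log (∫ z, exp (L z) ∂μ) := by
  have := isProbabilityMeasure_tilted hexp
  calc gibbsEntropy μ L = ∫ z, (L z - log (∫ w, exp (L w) ∂μ)) ∂μ.tilted L := by
        simp only [integral_tilted, ← gibbsDensity_eq_div hexp, smul_eq_mul]
        simp only [gibbsEntropy, gibbsDensity, log_exp]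
    _ = _ := by rw [integral_sub hL (integrable_const _), integral_const, probReal_univ, one_smul]

lemma integral_gibbsDensity [NeZero μ] (hexp : Integrable (fun z => exp (L z)) μ) :
    ∫ z, gibbsDensity μ L z ∂μ = 1 := by
  simp only [gibbsDensity_eq_div hexp, integral_div, div_self (integral_exp_pos hexp).ne']

lemma gibbsEntropy_nonneg [IsProbabilityMeasure μ] (hexp : Integrable (fun z => exp (L z)) μ)
    (hint : Integrable (fun z => gibbsDensity μ L z * log (gibbsDensity μ L z)) μ) :
    0 ≤ gibbsEntropy μ L := by
  have hV : Integrable (gibbsDensity μ L) μ := by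
    simpa only [← gibbsDensity_eq_div hexp] using hexp.div_const (∫ w, exp (L w) ∂μ)
  calc 0 = ∫ z, (gibbsDensity μ L z - 1) ∂μ := by
        rw [integral_sub hV (integrable_const 1), integral_gibbsDensity hexp, integral_const,
          probReal_univ, one_smul, sub_self]
    _ ≤ gibbsEntropy μ L := integral_mono (hV.sub (integrable_const 1)) hint
        fun z => self_sub_one_le_mul_log (exp_pos _).le

lemma integrable_exp_mul_self_of_gibbsDensity [IsFiniteMeasure μ] (hL : AEMeasurable L μ)
    (h : Integrable (fun z => gibbsDensity μ L z * log (gibbsDensity μ L z)) μ) :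
    Integrable (fun z => exp (L z) * L z) μ := by
  simp only [gibbsDensity, log_exp] at h
  simpa only [sub_neg_eq_add, sub_add_cancel] using
    integrable_exp_mul_self_sub_const (hL.sub_const _) h (-log (∫ w, exp (L w) ∂μ))

end Gibbs

section GaussianGibbs

variable {v : NNReal} {L L' : ℝ → ℝ}

lemma gibbsEntropy_gaussianReal_neg (hL : L.Even) (x : ℝ) (v : NNReal) :
    gibbsEntropy (gaussianReal (-x) v) L = gibbsEntropy (gaussianReal x v) L := by
  rw [← gibbsEntropy_comp ⟨measurable_neg, gaussianReal_map_neg⟩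
    (MeasurableEquiv.neg ℝ).measurableEmbedding L]
  simp only [hL.eq]

lemma hasDerivAt_integral_exp_gaussianReal (hv : v ≠ 0) (hL : ConvexOn ℝ Set.univ L)
    (hL' : ∀ᵐ y, HasDerivAt L (L' y) y)
    (hint : ∀ x, Integrable (fun y => exp (L y)) (gaussianReal x v)) (x : ℝ) :
    Integrable (fun y => exp (L y) * L' y) (gaussianReal x v) ∧
      HasDerivAt (fun x => ∫ y, exp (L y) ∂gaussianReal x v)
        (∫ y, exp (L y) * L' y ∂gaussianReal x v) x :=
  hasDerivAt_integral_gaussianReal_of_convexOn hv (convexOn_exp_comp hL)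
    (hL'.mono fun _ hy => hy.exp) hint x

lemma hasDerivAt_integral_exp_mul_self_gaussianReal (hv : v ≠ 0) (hL : ConvexOn ℝ Set.univ L)
    (hL_nonneg : ∀ y, 0 ≤ L y) (hL' : ∀ᵐ y, HasDerivAt L (L' y) y)
    (hint : ∀ x, Integrable (fun y => exp (L y) * L y) (gaussianReal x v)) (x : ℝ) :
    Integrable (fun y => exp (L y) * (L y * L' y)) (gaussianReal x v) ∧
      HasDerivAt (fun x => ∫ y, exp (L y) * L y ∂gaussianReal x v)
        ((∫ y, exp (L y) * (L y * L' y) ∂gaussianReal x v) +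
          ∫ y, exp (L y) * L' y ∂gaussianReal x v) x := by
  have hL'_int := (hasDerivAt_integral_exp_gaussianReal hv hL hL' (fun x =>
    integrable_exp_of_integrable_exp_mul_self hL.locallyLipschitz.continuous.aemeasurable
      (hint x)) x).1
  have hF' : ∀ᵐ y, HasDerivAt (fun y => exp (L y) * L y)
      (exp (L y) * (L y * L' y) + exp (L y) * L' y) y :=
    hL'.mono fun y hy => (hy.exp.mul hy).congr_deriv (by ring)
  obtain ⟨hF'_int, hderiv⟩ := hasDerivAt_integral_gaussianReal_of_convexOn hv
    (convexOn_exp_comp_mul_self hL fun y _ => hL_nonneg y) hF' hint x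
  have hLL'_int : Integrable (fun y => exp (L y) * (L y * L' y)) (gaussianReal x v) := by
    simpa only [Pi.sub_def, add_sub_cancel_right] using hF'_int.sub hL'_int
  exact ⟨hLL'_int, integral_add hLL'_int hL'_int ▸ hderiv⟩

lemma hasDerivAt_gibbsEntropy_gaussianReal (hv : v ≠ 0) (hL : ConvexOn ℝ Set.univ L)
    (hL_nonneg : ∀ y, 0 ≤ L y) (hL' : ∀ᵐ y, HasDerivAt L (L' y) y)
    (hint : ∀ x, Integrable (fun y => exp (L y) * L y) (gaussianReal x v)) (x : ℝ) :
    HasDerivAt (fun x => gibbsEntropy (gaussianReal x v) L)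
      (∫ y, L y * L' y ∂(gaussianReal x v).tilted L -
        (∫ y, L y ∂(gaussianReal x v).tilted L) * ∫ y, L' y ∂(gaussianReal x v).tilted L) x := by
  have hexp (x : ℝ) := integrable_exp_of_integrable_exp_mul_self
    hL.locallyLipschitz.continuous.aemeasurable (hint x)
  have hentropy : (fun x => gibbsEntropy (gaussianReal x v) L) = fun x =>
      (∫ y, exp (L y) * L y ∂gaussianReal x v) / (∫ y, exp (L y) ∂gaussianReal x v) -
        log (∫ y, exp (L y) ∂gaussianReal x v) := by
    ext x
    rw [gibbsEntropy_eq_integral_tilted_sub_log (hexp x) ((integrable_tilted_iff (hexp x) L).2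
      (hint x)), integral_tilted_eq_div]
  have hZ := (integral_exp_pos (hexp x)).ne'
  have hZ_deriv := (hasDerivAt_integral_exp_gaussianReal hv hL hL' hexp x).2
  have hN_deriv := (hasDerivAt_integral_exp_mul_self_gaussianReal hv hL hL_nonneg hL' hint x).2
  simp only [hentropy, integral_tilted_eq_div]
  refine ((hN_deriv.div hZ_deriv hZ).sub (hZ_deriv.log hZ)).congr_deriv ?_
  field_simp
  ring

lemma monotoneOn_gibbsEntropy_gaussianReal_of_nonneg (hv : v ≠ 0) (hL : ConvexOn ℝ Set.univ L)
    (hL_even : L.Even) (hL_nonneg : ∀ y, 0 ≤ L y)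
    (hint : ∀ x, Integrable (fun y => exp (L y) * L y) (gaussianReal x v)) :
    MonotoneOn (fun x => gibbsEntropy (gaussianReal x v) L) (Set.Ici 0) := by
  have hexp (x : ℝ) := integrable_exp_of_integrable_exp_mul_self
    hL.locallyLipschitz.continuous.aemeasurable (hint x)
  obtain ⟨L', hL'_odd, hL'_mono, hL'⟩ := exists_odd_monotone_ae_hasDerivAt hL hL_even
  have hderiv := hasDerivAt_gibbsEntropy_gaussianReal hv hL hL_nonneg hL' hint
  refine monotoneOn_of_deriv_nonneg (convex_Ici 0)
    (fun x _ => (hderiv x).continuousAt.continuousWithinAt)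
    (fun x _ => (hderiv x).differentiableAt.differentiableWithinAt) fun x hx => ?_
  have hL_int : Integrable L ((gaussianReal x v).tilted L) :=
    (integrable_tilted_iff (hexp x) _).2 (hint x)
  have hL'_int : Integrable L' ((gaussianReal x v).tilted L) :=
    (integrable_tilted_iff (hexp x) _).2
      (hasDerivAt_integral_exp_gaussianReal hv hL hL' hexp x).1
  have hLL'_int : Integrable (fun y => L y * L' y) ((gaussianReal x v).tilted L) :=
    (integrable_tilted_iff (hexp x) _).2
      (hasDerivAt_integral_exp_mul_self_gaussianReal hv hL hL_nonneg hL' hint x).1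
  rw [(hderiv x).deriv, sub_nonneg]
  exact integral_mul_integral_le_tilted_gaussianReal_of_even_of_odd hv hL_even hL_even
    (monotoneOn_Ici_of_convexOn_of_even hL hL_even) hL'_odd hL'_mono (interior_subset hx)
    (hexp x) hL_int hL'_int hLL'_int

lemma monotoneOn_gibbsEntropy_gaussianReal (hv : v ≠ 0) (hL : ConvexOn ℝ Set.univ L)
    (hL_even : L.Even) (hint : ∀ x, Integrable (fun y => exp (L y) * L y) (gaussianReal x v)) :
    MonotoneOn (fun x => gibbsEntropy (gaussianReal x v) L) (Set.Ici 0) := by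
  have hL_meas : Measurable L := hL.locallyLipschitz.continuous.measurable
  have hexp (x : ℝ) := integrable_exp_of_integrable_exp_mul_self hL_meas.aemeasurable (hint x)
  have hL_ge (y : ℝ) : L 0 ≤ L y :=
    apply_abs_of_even_s9 hL_even y ▸ monotoneOn_Ici_of_convexOn_of_even hL hL_even
      Set.self_mem_Ici (abs_nonneg y) (abs_nonneg y)
  -- Subtracting `L 0` leaves the Gibbs density unchanged and makes `L` nonnegative, as the
  -- convexity of `exp L * L` requires.
  have hmono := monotoneOn_gibbsEntropy_gaussianReal_of_nonneg (L := fun y => L y - L 0) hv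
    (hL.sub (concaveOn_const (L 0) convex_univ)) (fun y => congrArg (· - L 0) (hL_even y))
    (fun y => sub_nonneg.2 (hL_ge y))
    fun x => integrable_exp_mul_self_sub_const hL_meas.aemeasurable (hint x) (L 0)
  simpa only [gibbsEntropy_sub_const (hexp _)] using hmono

end GaussianGibbs

theorem gibbs_entropy_in_C_general
    (Φ : ℝ → ℝ) (hΦconv : ConvexOn ℝ Set.univ Φ) (hΦsymm : ∀ x, Φ (-x) = Φ x)
    (σ2 : NNReal) (hσ2 : 0 < σ2) (m : ℝ) (hm : 0 < m)
    (ψ : ℝ → ℝ)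
    (hψ : ∀ x, ψ x = (1 / m) *
      Real.log (∫ z, Real.exp (m * Φ (x + z)) ∂(gaussianReal 0 σ2)))
    (V : ℝ → ℝ → ℝ)
    (hV : ∀ x z, V x z = Real.exp (m * (Φ (x + z) - ψ x)))
    (hint : ∀ x, Integrable (fun z => V x z * Real.log (V x z)) (gaussianReal 0 σ2))
    (f : ℝ → ℝ)
    (hf : ∀ x, f x = ∫ z, V x z * Real.log (V x z) ∂(gaussianReal 0 σ2)) :
    (∀ x, 0 ≤ f x) ∧ (∀ x, f (-x) = f x) ∧ MonotoneOn f (Set.Ici (0 : ℝ)) := by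
  set L : ℝ → ℝ := fun y => m * Φ y
  have hL : ConvexOn ℝ Set.univ L := hΦconv.smul hm.le
  have hL_even : L.Even := fun y => congrArg (m * ·) (hΦsymm y)
  have hL_meas := hL.locallyLipschitz.continuous.measurable
  have shift (x : ℝ) := measurePreserving_const_add_gaussianReal x σ2
  have shift_emb (x : ℝ) := measurableEmbedding_addLeft x
  have hV_eq (x z : ℝ) : V x z = gibbsDensity (gaussianReal x σ2) L (x + z) := by
    rw [hV, hψ, mul_sub, ← mul_assoc, mul_one_div_cancel hm.ne', one_mul,
      ← gibbsDensity_comp (shift x) (shift_emb x), gibbsDensity]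
  have hf_eq : f = fun x => gibbsEntropy (gaussianReal x σ2) L := by
    ext x
    rw [hf, gibbsEntropy, ← (shift x).integral_comp (shift_emb x)]
    simp only [hV_eq]
  have hV_int (x : ℝ) : Integrable (fun y => gibbsDensity (gaussianReal x σ2) L y *
      log (gibbsDensity (gaussianReal x σ2) L y)) (gaussianReal x σ2) := by
    rw [← (shift x).integrable_comp_emb (shift_emb x)]
    simpa only [hV_eq, Function.comp_def] using hint x
  have hself (x : ℝ) := integrable_exp_mul_self_of_gibbsDensity hL_meas.aemeasurable (hV_int x)
  subst hf_eq
  exact ⟨fun x => gibbsEntropy_nonneg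
      (integrable_exp_of_integrable_exp_mul_self hL_meas.aemeasurable (hself x)) (hV_int x),
    fun x => gibbsEntropy_gaussianReal_neg hL_even x σ2,
    monotoneOn_gibbsEntropy_gaussianReal hσ2.ne' hL hL_even hself⟩

/-- Lemma 2(f): `f(x) = E[V(x,z) log V(x,z)]` is nonnegative,
even, and nondecreasing on `[0,∞)`, where `V` is the Gibbs change of density
associated with a convex symmetric nonnegative `Φ̃`. -/
theorem gibbs_entropy_in_C
    (Φ : ℝ → ℝ) (hΦsmooth : ContDiff ℝ (⊤ : ℕ∞) Φ)
    (hΦconv : ConvexOn ℝ Set.univ Φ)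
    (hΦsymm : ∀ x, Φ (-x) = Φ x) (hΦnonneg : ∀ x, 0 ≤ Φ x)
    (σ2 : NNReal) (hσ2 : 0 < σ2) (m : ℝ) (hm : 0 < m)
    (ψ : ℝ → ℝ)
    (hψ : ∀ x, ψ x = (1 / m) *
      Real.log (∫ z, Real.exp (m * Φ (x + z)) ∂(gaussianReal 0 σ2)))
    (V : ℝ → ℝ → ℝ)
    (hV : ∀ x z, V x z = Real.exp (m * (Φ (x + z) - ψ x)))
    (hint : ∀ x, Integrable (fun z => V x z * Real.log (V x z)) (gaussianReal 0 σ2))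
    (f : ℝ → ℝ)
    (hf : ∀ x, f x = ∫ z, V x z * Real.log (V x z) ∂(gaussianReal 0 σ2)) :
    (∀ x, 0 ≤ f x) ∧ (∀ x, f (-x) = f x) ∧ MonotoneOn f (Set.Ici (0 : ℝ)) :=
  gibbs_entropy_in_C_general Φ hΦconv hΦsymm σ2 hσ2 m hm ψ hψ V hV hint f hf
end

section
/- For η = Φ(|h⃗ + z⃗|) with z⃗ a standard Gaussian vector in ℝⁿ and h⃗ ∈ ℝⁿ fixed, the function m ↦ (1/m) log E[exp(m η)] is convex on (0, ∞). -/
open MeasureTheory ProbabilityTheory Real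

/-! Let `γ` be the standard Gaussian measure on the line and `F` convex. The monotone map `R`
pushing the tilted density `exp (m F) γ / Z` to `γ` is a contraction, so the curves
`T_k x = R x + k (x - R x) / m`, which are affine in `k` and pass through `x` at `k = m`, are
increasing in `x` for `k > 0`. Changing variables along `T_k` and applying Jensen's inequality to
the tilted density bounds the log-norm of `F` at `m = a k₀ + b k₁` by those of `F₀` at `k₀` and `F₁`
at `k₁` whenever `F (a x₀ + b x₁) ≤ a F₀ x₀ + b F₁ x₁`; the convexity in `k` that this needs is that
of `log (1 + k s) / k`. Such a three-function inequality tensorizes, in the manner of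
Prékopa–Leindler, and passes from maxima of finitely many affine functions to all convex
functions. -/

namespace GaussianLogNorm

open Filter Set Topology
open scoped NNReal

section Transport

variable {p q : ℝ → ℝ}

lemma hasDerivAt_integral_Iic (hpc : Continuous p) (hpi : Integrable p) (x : ℝ) :
    HasDerivAt (fun x => ∫ y in Iic x, p y) (p x) x := by
  have split_at_zero (x : ℝ) :
      ∫ y in Iic x, p y = (∫ y in Iic 0, p y) + ∫ y in (0 : ℝ)..x, p y := by
    rw [← intervalIntegral.integral_Iic_sub_Iic hpi.integrableOn hpi.integrableOn]
    ring
  rw [funext split_at_zero]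
  exact (intervalIntegral.integral_hasDerivAt_right (hpc.intervalIntegrable _ _)
    (hpc.stronglyMeasurableAtFilter _ _) hpc.continuousAt).const_add _

lemma strictMono_integral_Iic (hpc : Continuous p) (hpi : Integrable p) (hp : ∀ x, 0 < p x) :
    StrictMono fun x => ∫ y in Iic x, p y :=
  strictMono_of_deriv_pos fun x => by
    rw [(hasDerivAt_integral_Iic hpc hpi x).deriv]
    exact hp x

lemma range_integral_Iic (hpc : Continuous p) (hpi : Integrable p) (hp : ∀ x, 0 < p x) :
    range (fun x => ∫ y in Iic x, p y) = Ioo 0 (∫ y, p y) := by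
  have mono := strictMono_integral_Iic hpc hpi hp
  have at_bot : Tendsto (fun x => ∫ y in Iic x, p y) atBot (𝓝 0) :=
    tendsto_integral_Iic_zero tendsto_id
  have at_top : Tendsto (fun x => ∫ y in Iic x, p y) atTop (𝓝 (∫ y, p y)) :=
    (aecover_Iic tendsto_id).integral_tendsto_of_countably_generated hpi
  have cont : Continuous fun x => ∫ y in Iic x, p y :=
    continuous_iff_continuousAt.2 fun x => (hasDerivAt_integral_Iic hpc hpi x).continuousAt
  refine Subset.antisymm (range_subset_iff.2 fun x => ⟨?_, ?_⟩) fun y hy => ?_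
  · exact (mono.monotone.le_of_tendsto at_bot (x - 1)).trans_lt (mono (sub_one_lt x))
  · exact (mono (lt_add_one x)).trans_le (mono.monotone.ge_of_tendsto at_top (x + 1))
  · obtain ⟨a, ha⟩ := (at_bot.eventually (gt_mem_nhds hy.1)).exists
    obtain ⟨b, hb⟩ := (at_top.eventually (lt_mem_nhds hy.2)).exists
    exact mem_range_of_exists_le_of_exists_ge cont ⟨a, ha.le⟩ ⟨b, hb.le⟩

lemma hasDerivAt_invFun_integral_Iic (hpc : Continuous p) (hpi : Integrable p)
    (hp : ∀ x, 0 < p x) (x : ℝ) :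
    HasDerivAt (Function.invFun fun x => ∫ y in Iic x, p y) (p x)⁻¹ (∫ y in Iic x, p y) := by
  set P : ℝ → ℝ := fun x => ∫ y in Iic x, p y
  have mono : StrictMono P := strictMono_integral_Iic hpc hpi hp
  have left_inv (x : ℝ) : Function.invFun P (P x) = x :=
    Function.leftInverse_invFun mono.injective x
  have range_mem : range P ∈ 𝓝 (P x) := by
    have range_eq : range P = Ioo 0 (∫ y, p y) := range_integral_Iic hpc hpi hp
    exact range_eq ▸ isOpen_Ioo.mem_nhds (range_eq ▸ mem_range_self x)
  have mono_inv : StrictMonoOn (Function.invFun P) (range P) := by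
    rintro _ ⟨u, rfl⟩ _ ⟨v, rfl⟩ huv
    simpa only [left_inv] using mono.lt_iff_lt.1 huv
  have image_inv : Function.invFun P '' range P = univ :=
    eq_univ_of_forall fun u => ⟨P u, mem_range_self u, left_inv u⟩
  have cont : ContinuousAt (Function.invFun P) (P x) :=
    mono_inv.continuousAt_of_image_mem_nhds range_mem (image_inv ▸ univ_mem)
  refine HasDerivAt.of_local_left_inverse (f := P) cont ?_ (hp x).ne' ?_
  · rw [left_inv]
    exact hasDerivAt_integral_Iic hpc hpi x
  · filter_upwards [range_mem] with u hu using Function.invFun_eq hu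

lemma exists_transport (hpc : Continuous p) (hpi : Integrable p) (hp : ∀ x, 0 < p x)
    (hqc : Continuous q) (hqi : Integrable q) (hq : ∀ x, 0 < q x)
    (hpq : ∫ x, p x = ∫ x, q x) :
    ∃ R : ℝ → ℝ, (∀ x, ∫ y in Iic (R x), p y = ∫ y in Iic x, q y) ∧
      ∀ x, HasDerivAt R (q x / p (R x)) x := by
  have mem_range (x : ℝ) : ∃ y, ∫ z in Iic y, p z = ∫ z in Iic x, q z := by
    rw [← Set.mem_range, range_integral_Iic hpc hpi hp, hpq, ← range_integral_Iic hqc hqi hq]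
    exact mem_range_self x
  choose R hR using mem_range
  have R_eq : R = (Function.invFun fun y => ∫ z in Iic y, p z) ∘ fun x => ∫ z in Iic x, q z := by
    funext x
    rw [Function.comp_apply, ← hR x]
    exact (Function.leftInverse_invFun (strictMono_integral_Iic hpc hpi hp).injective _).symm
  refine ⟨R, hR, fun x => ?_⟩
  have deriv_inv := hasDerivAt_invFun_integral_Iic hpc hpi hp (R x)
  rw [hR x] at deriv_inv
  have deriv_comp := deriv_inv.comp x (hasDerivAt_integral_Iic hqc hqi x)
  rwa [← R_eq, ← div_eq_inv_mul] at deriv_comp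

lemma setIntegral_lt_setIntegral_of_forall_lt {s : Set ℝ} (hs : MeasurableSet s)
    (hs0 : volume s ≠ 0) (hpi : Integrable p) (hqi : Integrable q) (hpq : ∀ x ∈ s, p x < q x) :
    ∫ x in s, p x < ∫ x in s, q x := by
  rw [← sub_pos, ← integral_sub hqi.integrableOn hpi.integrableOn,
    setIntegral_pos_iff_support_of_nonneg_ae (f := fun x => q x - p x) ?_
      (hqi.sub hpi).integrableOn]
  · refine (pos_iff_ne_zero.2 hs0).trans_le (measure_mono fun x hx => ⟨?_, hx⟩)
    exact (sub_pos.2 (hpq x hx)).ne'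
  · filter_upwards [ae_restrict_mem hs] with x hx
    exact (sub_pos.2 (hpq x hx)).le

-- Otherwise `q` exceeds `p` on one of the two half-lines bounded by `x₀`, which carry equal masses.
lemma le_of_integral_Iic_eq (hpi : Integrable p) (hqi : Integrable q)
    (hpq : ∫ x, p x = ∫ x, q x) (hord : {x | q x ≤ p x}.OrdConnected) {x₀ : ℝ}
    (heq : ∫ x in Iic x₀, p x = ∫ x in Iic x₀, q x) : q x₀ ≤ p x₀ := by
  by_contra hx₀
  have heq' : ∫ x in Ioi x₀, p x = ∫ x in Ioi x₀, q x := by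
    have hp := integral_add_compl (measurableSet_Iic (a := x₀)) hpi
    have hq := integral_add_compl (measurableSet_Iic (a := x₀)) hqi
    rw [compl_Iic] at hp hq
    linarith
  by_cases left : ∀ x ∈ Iic x₀, p x < q x
  · exact (setIntegral_lt_setIntegral_of_forall_lt measurableSet_Iic (by simp) hpi hqi left).ne heq
  · push Not at left
    obtain ⟨a, ha, hqa⟩ := left
    have right : ∀ x ∈ Ioi x₀, p x < q x := fun b hb =>
      not_le.1 fun hqb => hx₀ (hord.out hqa hqb ⟨ha, le_of_lt hb⟩)
    exact (setIntegral_lt_setIntegral_of_forall_lt measurableSet_Ioi (by simp) hpi hqi right).ne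
      heq'

end Transport

lemma integral_deriv_mul_comp_le {T T' f : ℝ → ℝ} (hT : ∀ x, HasDerivAt T (T' x) x)
    (hT' : ∀ x, 0 ≤ T' x) (hf : ∀ x, 0 ≤ f x) (hfi : Integrable f) :
    Integrable (fun x => T' x * f (T x)) ∧ ∫ x, T' x * f (T x) ≤ ∫ x, f x := by
  have mono : MonotoneOn T univ :=
    (monotone_of_deriv_nonneg (fun x => (hT x).differentiableAt)
      fun x => (hT x).deriv ▸ hT' x).monotoneOn _
  have deriv_within (x : ℝ) (_ : x ∈ univ) : HasDerivWithinAt T (T' x) univ x :=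
    (hT x).hasDerivWithinAt
  constructor
  · simpa only [smul_eq_mul, integrableOn_univ] using
      (integrableOn_image_iff_integrableOn_deriv_smul_of_monotoneOn MeasurableSet.univ
        deriv_within mono f).1 hfi.integrableOn
  · calc ∫ x, T' x * f (T x)
        = ∫ x in univ, T' x • f (T x) := by simp only [smul_eq_mul, setIntegral_univ]
      _ = ∫ x in T '' univ, f x :=
        (integral_image_eq_integral_deriv_smul_of_monotoneOn MeasurableSet.univ
          deriv_within mono f).symm
      _ ≤ ∫ x, f x := setIntegral_le_integral hfi (ae_of_all _ hf)

lemma mul_log_div_le {q B I : ℝ} (hq : 0 < q) (hB : 0 < B) (hI : 0 < I) :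
    q * log (B / q) ≤ q * (log I - 1) + B / I := by
  have split_log : log (B / q) = log I + log (B / (q * I)) := by
    rw [← log_mul hI.ne' (div_pos hB (mul_pos hq hI)).ne']
    congr 1
    field_simp
  calc q * log (B / q)
      ≤ q * (log I + (B / (q * I) - 1)) := by
        rw [split_log]
        gcongr
        exact log_le_sub_one_of_pos (by positivity)
    _ = q * (log I - 1) + B / I := by
        field_simp
        ring

-- Jensen's inequality for the density `q`. The logarithms need not be integrable, because only
-- `log t ≤ t - 1` at `t = Bᵢ / (q Iᵢ)` is integrated against `q`.
lemma le_log_add_log_of_integral_le {Ω : Type*} [MeasurableSpace Ω] {μ : Measure Ω}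
    {q B₀ B₁ : Ω → ℝ} {α β c I₀ I₁ : ℝ} (hα : 0 ≤ α) (hβ : 0 ≤ β)
    (hq : ∀ x, 0 < q x) (hq1 : ∫ x, q x ∂μ = 1)
    (hB₀ : ∀ x, 0 < B₀ x) (hB₁ : ∀ x, 0 < B₁ x)
    (hB₀i : Integrable B₀ μ) (hB₁i : Integrable B₁ μ) (hI₀ : 0 < I₀) (hI₁ : 0 < I₁)
    (hBI₀ : ∫ x, B₀ x ∂μ ≤ I₀) (hBI₁ : ∫ x, B₁ x ∂μ ≤ I₁)
    (hc : ∀ x, c ≤ α * log (B₀ x / q x) + β * log (B₁ x / q x)) :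
    c ≤ α * log I₀ + β * log I₁ := by
  have hqi : Integrable q μ := .of_integral_ne_zero (by rw [hq1]; exact one_ne_zero)
  have pointwise (x : Ω) :
      q x * c ≤ q x * (α * (log I₀ - 1) + β * (log I₁ - 1))
        + (B₀ x * (α / I₀) + B₁ x * (β / I₁)) := by
    have h₀ := mul_le_mul_of_nonneg_left (mul_log_div_le (hq x) (hB₀ x) hI₀) hα
    have h₁ := mul_le_mul_of_nonneg_left (mul_log_div_le (hq x) (hB₁ x) hI₁) hβ
    have h₂ := mul_le_mul_of_nonneg_left (hc x) (hq x).le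
    linear_combination h₀ + h₁ + h₂
  have hBi : Integrable (fun x => B₀ x * (α / I₀) + B₁ x * (β / I₁)) μ :=
    (hB₀i.mul_const _).add (hB₁i.mul_const _)
  calc c = ∫ x, q x * c ∂μ := by rw [integral_mul_const, hq1, one_mul]
    _ ≤ ∫ x, q x * (α * (log I₀ - 1) + β * (log I₁ - 1))
          + (B₀ x * (α / I₀) + B₁ x * (β / I₁)) ∂μ :=
        integral_mono (hqi.mul_const c) ((hqi.mul_const _).add hBi) pointwise
    _ = α * (log I₀ - 1) + β * (log I₁ - 1)
          + ((∫ x, B₀ x ∂μ) * (α / I₀) + (∫ x, B₁ x ∂μ) * (β / I₁)) := by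
        rw [integral_add (hqi.mul_const _) hBi,
          integral_add (hB₀i.mul_const _) (hB₁i.mul_const _), integral_mul_const,
          integral_mul_const, integral_mul_const, hq1, one_mul]
    _ ≤ α * (log I₀ - 1) + β * (log I₁ - 1) + (I₀ * (α / I₀) + I₁ * (β / I₁)) := by gcongr
    _ = α * log I₀ + β * log I₁ := by
        field_simp
        ring

lemma log_one_add_mul_div_eq_integral {s k : ℝ} (hs : 0 ≤ s) (hk : 0 < k) :
    log (1 + k * s) / k = ∫ u in (0 : ℝ)..s, (1 + k * u)⁻¹ := by
  have pos (u : ℝ) (hu : u ∈ uIcc 0 s) : 0 < 1 + k * u := by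
    rw [uIcc_of_le hs] at hu
    have := mul_nonneg hk.le hu.1
    linarith
  rw [intervalIntegral.integral_eq_sub_of_hasDerivAt (f := fun u => log (1 + k * u) / k)]
  · simp only [mul_zero, add_zero, log_one, zero_div, sub_zero]
  · intro u hu
    have := ((((hasDerivAt_id u).const_mul k).const_add 1).log (pos u hu).ne').div_const k
    rwa [mul_one, div_div_cancel_left' hk.ne'] at this
  · exact (ContinuousOn.inv₀ (by fun_prop) fun u hu => (pos u hu).ne').intervalIntegrable

lemma convexOn_log_one_add_mul_div {s : ℝ} (hs : 0 ≤ s) :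
    ConvexOn ℝ (Ioi 0) fun k => log (1 + k * s) / k := by
  have pos {u k : ℝ} (hu : 0 ≤ u) (hk : k ∈ Ioi (0 : ℝ)) : 0 < 1 + k * u := by
    have := mul_nonneg (le_of_lt hk) hu
    linarith
  have convex_inv {u : ℝ} (hu : 0 ≤ u) : ConvexOn ℝ (Ioi 0) fun k : ℝ => (1 + k * u)⁻¹ := by
    refine ⟨convex_Ioi 0, fun k hk l hl a b ha hb hab => ?_⟩
    have convex := (convexOn_zpow (𝕜 := ℝ) (-1)).2 (pos hu hk) (pos hu hl) ha hb hab
    simp only [smul_eq_mul, zpow_neg_one] at convex ⊢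
    have comb : 1 + (a * k + b * l) * u = a * (1 + k * u) + b * (1 + l * u) := by
      linear_combination -hab
    rwa [comb]
  have convex_integral :
      ConvexOn ℝ (Ioi 0) fun k : ℝ => ∫ u in Ioc 0 s, (1 + k * u)⁻¹ :=
    integral_convexOn_of_integrand_ae (convex_Ioi 0)
      ((ae_restrict_mem measurableSet_Ioc).mono fun u hu => convex_inv hu.1.le)
      fun k hk => (ContinuousOn.integrableOn_Icc (ContinuousOn.inv₀ (by fun_prop)
        fun u hu => (pos hu.1 hk).ne')).mono_set Ioc_subset_Icc_self
  refine convex_integral.congr fun k hk => ?_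
  rw [log_one_add_mul_div_eq_integral hs hk, intervalIntegral.integral_of_le hs]

/-- The logarithm of the `L^m(μ)` norm of `exp F`, as a function of `m`; since division by zero
gives zero, its value at `m = 0` is meaningless. -/
noncomputable def logNorm {Ω : Type*} [MeasurableSpace Ω] (F : Ω → ℝ) (μ : Measure Ω) (m : ℝ) : ℝ :=
  1 / m * cgf F μ m

lemma integral_exp_mul_sub_cgf {Ω : Type*} [MeasurableSpace Ω] {μ : Measure Ω}
    [IsProbabilityMeasure μ] {F : Ω → ℝ} {m : ℝ} (hF : m ∈ integrableExpSet F μ) :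
    Integrable (fun x => exp (m * F x - cgf F μ m)) μ ∧
      ∫ x, exp (m * F x - cgf F μ m) ∂μ = 1 := by
  have factor (x : Ω) : exp (m * F x - cgf F μ m) = exp (m * F x) / mgf F μ m := by
    rw [exp_sub, exp_cgf hF]
  simp only [factor]
  exact ⟨hF.div_const _, by rw [integral_div]; exact div_self (mgf_pos hF).ne'⟩

section RealLine

local notation "γ" => gaussianReal 0 1
local notation "φ" => gaussianPDFReal 0 1

lemma gaussianPDFReal_zero_one_pos (x : ℝ) : 0 < φ x :=
  gaussianPDFReal_pos 0 1 x one_ne_zero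

lemma log_gaussianPDFReal_zero_one (x : ℝ) : log (φ x) = -x ^ 2 / 2 - log (√(2 * π)) := by
  have : √(2 * π) ≠ 0 := by positivity
  rw [gaussianPDFReal, log_mul (by simpa using this) (exp_ne_zero _), log_exp, log_inv]
  simp only [NNReal.coe_one, mul_one, sub_zero]
  ring

lemma gaussianPDFReal_zero_one_sub (x s : ℝ) : φ (x - s) = φ x * exp (s * x - s ^ 2 / 2) := by
  rw [gaussianPDFReal, gaussianPDFReal, mul_assoc _ (exp _) (exp _), ← exp_add]
  simp only [NNReal.coe_one]
  ring_nf

lemma integral_gaussianReal_zero_one (f : ℝ → ℝ) : ∫ x, f x ∂γ = ∫ x, φ x * f x := by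
  simp only [integral_gaussianReal_eq_integral_smul one_ne_zero, smul_eq_mul]

lemma integrable_gaussianReal_zero_one {f : ℝ → ℝ} :
    Integrable f γ ↔ Integrable fun x => φ x * f x := by
  rw [gaussianReal_of_var_ne_zero _ one_ne_zero, integrable_withDensity_iff_integrable_smul'
    (measurable_gaussianPDF _ _) (ae_of_all _ fun _ => gaussianPDF_lt_top)]
  simp only [toReal_gaussianPDF, smul_eq_mul]

lemma ordConnected_setOf_mul_exp_le_gaussianPDFReal_sub {V : ℝ → ℝ} (hV : ConvexOn ℝ univ V)
    (s : ℝ) : {x | φ x * exp (V x) ≤ φ (x - s)}.OrdConnected := by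
  have convex : ConvexOn ℝ univ fun x => V x - s * x :=
    hV.sub ⟨convex_univ, fun x _ y _ a b _ _ _ => by
      simp only [smul_eq_mul]
      exact le_of_eq (by ring)⟩
  have sublevel : {x | φ x * exp (V x) ≤ φ (x - s)} = {x | V x - s * x ≤ -(s ^ 2 / 2)} := by
    ext x
    rw [mem_ofPred_eq, mem_ofPred_eq, gaussianPDFReal_zero_one_sub,
      mul_le_mul_iff_right₀ (gaussianPDFReal_zero_one_pos x), exp_le_exp]
    constructor <;> intro h <;> linarith
  rw [sublevel]
  simpa only [mem_univ, true_and] using (convex.convex_le (-(s ^ 2 / 2))).ordConnected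

-- Compare `exp V • γ` with the translate of `γ` by `s = x - R x`: both put the same mass on the
-- half-line below `x`.
lemma exists_contraction_transport {V : ℝ → ℝ} (hV : ConvexOn ℝ univ V)
    (hVi : Integrable (fun x => exp (V x)) γ) (hV1 : ∫ x, exp (V x) ∂γ = 1) :
    ∃ R R' : ℝ → ℝ, ∀ x, HasDerivAt R (R' x) x ∧ 0 < R' x ∧ R' x ≤ 1 ∧
      φ (R x) * R' x = φ x * exp (V x) := by
  have hφc : Continuous φ := by unfold gaussianPDFReal; fun_prop
  have hφi : Integrable φ := integrable_gaussianPDFReal 0 1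
  have hφpos := gaussianPDFReal_zero_one_pos
  have hφ1 : ∫ x, φ x = 1 := integral_gaussianPDFReal_eq_one 0 one_ne_zero
  have hVc : Continuous V := continuousOn_univ.1 (hV.continuousOn isOpen_univ)
  have hqi := integrable_gaussianReal_zero_one.1 hVi
  have hq1 : ∫ x, φ x * exp (V x) = 1 := by rw [← integral_gaussianReal_zero_one, hV1]
  have hqpos (x : ℝ) : 0 < φ x * exp (V x) := mul_pos (hφpos x) (exp_pos _)
  obtain ⟨R, hR_mass, hR_deriv⟩ :=
    exists_transport hφc hφi hφpos (by fun_prop) hqi hqpos (hφ1.trans hq1.symm)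
  refine ⟨R, _, fun x => ⟨hR_deriv x, div_pos (hqpos x) (hφpos _), ?_,
    mul_div_cancel₀ _ (hφpos _).ne'⟩⟩
  rw [div_le_one (hφpos _)]
  obtain ⟨s, hs⟩ : ∃ s, R x = x - s := ⟨x - R x, by ring⟩
  have mass_translate : ∫ y in Iic x, φ (y - s) = ∫ y in Iic (x - s), φ y := by
    have := ((measurePreserving_sub_right volume s).setIntegral_preimage_emb
      (MeasurableEquiv.subRight s).measurableEmbedding φ (Iic (x - s)))
    rwa [preimage_sub_const_Iic, sub_add_cancel] at this
  rw [hs]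
  refine le_of_integral_Iic_eq (p := fun y => φ (y - s)) (hφi.comp_sub_right s) hqi ?_
    (ordConnected_setOf_mul_exp_le_gaussianPDFReal_sub hV s) ?_
  · rw [integral_sub_right_eq_self φ s, hφ1, hq1]
  · rw [mass_translate, ← hs, hR_mass]

lemma integral_deriv_mul_comp_le_mgf {G T T' : ℝ → ℝ} {k : ℝ} (hT : ∀ x, HasDerivAt T (T' x) x)
    (hT' : ∀ x, 0 ≤ T' x) (hG : k ∈ integrableExpSet G γ) :
    Integrable (fun x => T' x * (φ (T x) * exp (k * G (T x)))) ∧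
      ∫ x, T' x * (φ (T x) * exp (k * G (T x))) ≤ mgf G γ k := by
  have := integral_deriv_mul_comp_le (f := fun x => φ x * exp (k * G x)) hT hT'
    (fun x => mul_nonneg (gaussianPDFReal_nonneg 0 1 x) (exp_nonneg _))
    (integrable_gaussianReal_zero_one.1 hG)
  rwa [← integral_gaussianReal_zero_one fun x => exp (k * G x)] at this

lemma convexOn_log_gaussianPDFReal_mul_div {y v r s : ℝ} (hr : 0 < r) (hs : 0 ≤ s) :
    ConvexOn ℝ (Ioi 0) fun k => log (φ (y + k * v) * (r + k * s) / (φ y * r)) / k := by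
  have affine (c d : ℝ) : ConvexOn ℝ (Ioi 0) fun k : ℝ => c * k + d :=
    ⟨convex_Ioi 0, fun k _ l _ a b _ _ hab => le_of_eq (by
      simp only [smul_eq_mul]
      linear_combination -d * hab)⟩
  refine ((affine (-v ^ 2 / 2) (-(y * v))).add
    (convexOn_log_one_add_mul_div (div_nonneg hs hr.le))).congr fun k hk => ?_
  have hk : 0 < k := hk
  have hrs : 0 < r + k * s := by positivity
  have split_log : log (1 + k * (s / r)) = log (r + k * s) - log r := by
    rw [← log_div hrs.ne' hr.ne']
    congr 1
    field_simp
  have hφ (x : ℝ) : φ x ≠ 0 := (gaussianPDFReal_zero_one_pos x).ne'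
  simp only [Pi.add_apply]
  rw [log_div (mul_ne_zero (hφ _) hrs.ne') (mul_ne_zero (hφ _) hr.ne'),
    log_mul (hφ _) hrs.ne', log_mul (hφ _) hr.ne', split_log,
    log_gaussianPDFReal_zero_one, log_gaussianPDFReal_zero_one]
  field_simp
  ring

lemma exists_interpolating_curves {F : ℝ → ℝ} {m : ℝ} (hF : ConvexOn ℝ univ F) (hm : 0 < m)
    (hi : m ∈ integrableExpSet F γ) :
    ∃ y v r s : ℝ → ℝ, ∀ x, y x + m * v x = x ∧ r x + m * s x = 1 ∧ 0 < r x ∧ 0 ≤ s x ∧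
      (∀ k, HasDerivAt (fun x => y x + k * v x) (r x + k * s x) x) ∧
      φ (y x) * r x = φ x * exp (m * F x - cgf F γ m) := by
  have hV : ConvexOn ℝ univ fun x => m * F x - cgf F γ m := by
    simp only [sub_eq_add_neg]
    exact (hF.smul hm.le).add_const (-cgf F γ m)
  obtain ⟨R, R', hR⟩ := exists_contraction_transport hV (integral_exp_mul_sub_cgf hi).1
    (integral_exp_mul_sub_cgf hi).2
  refine ⟨R, fun x => (x - R x) / m, R', fun x => (1 - R' x) / m, fun x => ?_⟩
  obtain ⟨hR_deriv, hR'_pos, hR'_le, hR_density⟩ := hR x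
  refine ⟨?_, ?_, hR'_pos, div_nonneg (sub_nonneg.2 hR'_le) hm.le, fun k => ?_, hR_density⟩
  · rw [mul_div_cancel₀ _ hm.ne', add_sub_cancel]
  · rw [mul_div_cancel₀ _ hm.ne', add_sub_cancel]
  · exact hR_deriv.add ((((hasDerivAt_id x).sub hR_deriv).div_const m).const_mul k)

lemma mul_le_log_div_add_log_div {q f f₀ f₁ c x y v r s a b k₀ k₁ m : ℝ} (hm : 0 < m)
    (hr : 0 < r) (hs : 0 ≤ s) (ha : 0 ≤ a) (hb : 0 ≤ b) (hab : a + b = 1) (hk₀ : 0 < k₀)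
    (hk₁ : 0 < k₁) (hk : a * k₀ + b * k₁ = m) (hx : y + m * v = x) (hrs : r + m * s = 1)
    (hq : q = φ x * exp (m * f - c)) (hyq : φ y * r = q) (hf : f ≤ a * f₀ + b * f₁) :
    1 / m * c ≤ a / k₀ * log ((r + k₀ * s) * (φ (y + k₀ * v) * exp (k₀ * f₀)) / q)
      + b / k₁ * log ((r + k₁ * s) * (φ (y + k₁ * v) * exp (k₁ * f₁)) / q) := by
  have hφ := gaussianPDFReal_zero_one_pos
  set g : ℝ → ℝ := fun k => log (φ (y + k * v) * (r + k * s) / (φ y * r)) / k with hg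
  have g_at_m : g m = 1 / m * c - f := by
    have : φ x / q = exp (c - m * f) := by
      rw [hq, div_mul_cancel_left₀ (hφ x).ne', ← exp_neg, neg_sub]
    simp only [hg, hx, hrs, hyq, mul_one, this, log_exp]
    field_simp
  have split_log {k : ℝ} (hk : 0 < k) (u : ℝ) :
      log ((r + k * s) * (φ (y + k * v) * exp (k * u)) / q) = k * (u + g k) := by
    have hrs : 0 < r + k * s := by positivity
    have regroup : (r + k * s) * (φ (y + k * v) * exp (k * u)) / q
        = φ (y + k * v) * (r + k * s) / (φ y * r) * exp (k * u) := by
      rw [hyq]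
      ring
    have ratio_pos : 0 < φ (y + k * v) * (r + k * s) / (φ y * r) :=
      div_pos (mul_pos (hφ _) hrs) (mul_pos (hφ _) hr)
    rw [regroup, log_mul ratio_pos.ne' (exp_ne_zero _), log_exp, hg]
    field_simp
    ring
  have convex := (convexOn_log_gaussianPDFReal_mul_div (y := y) (v := v) hr hs).2 hk₀ hk₁ ha hb hab
  rw [smul_eq_mul, smul_eq_mul, hk] at convex
  calc 1 / m * c = f + g m := by rw [g_at_m]; ring
    _ ≤ (a * f₀ + b * f₁) + (a * g k₀ + b * g k₁) := add_le_add hf convex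
    _ = _ := by
      rw [split_log hk₀, split_log hk₁]
      field_simp
      ring

lemma logNorm_gaussianReal_le {F F₀ F₁ : ℝ → ℝ} {a b k₀ k₁ : ℝ} (hF : ConvexOn ℝ univ F)
    (ha : 0 ≤ a) (hb : 0 ≤ b) (hab : a + b = 1) (hk₀ : 0 < k₀) (hk₁ : 0 < k₁)
    (hle : ∀ x₀ x₁, F (a * x₀ + b * x₁) ≤ a * F₀ x₀ + b * F₁ x₁)
    (hi : a * k₀ + b * k₁ ∈ integrableExpSet F γ) (hi₀ : k₀ ∈ integrableExpSet F₀ γ)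
    (hi₁ : k₁ ∈ integrableExpSet F₁ γ) :
    logNorm F γ (a * k₀ + b * k₁) ≤ a * logNorm F₀ γ k₀ + b * logNorm F₁ γ k₁ := by
  have hm : 0 < a * k₀ + b * k₁ := convex_Ioi (0 : ℝ) hk₀ hk₁ ha hb hab
  obtain ⟨m, hmk⟩ : ∃ m, m = a * k₀ + b * k₁ := ⟨_, rfl⟩
  rw [← hmk] at hm hi ⊢
  obtain ⟨y, v, r, s, h⟩ := exists_interpolating_curves hF hm hi
  choose hx hrs hr hs deriv_curve density using h
  have curve_deriv_pos {k : ℝ} (hk : 0 < k) (x : ℝ) : 0 < r x + k * s x :=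
    add_pos_of_pos_of_nonneg (hr x) (mul_nonneg hk.le (hs x))
  have curve_pos {G : ℝ → ℝ} {k : ℝ} (hk : 0 < k) (x : ℝ) :
      0 < (r x + k * s x) * (φ (y x + k * v x) * exp (k * G (y x + k * v x))) :=
    mul_pos (curve_deriv_pos hk x) (mul_pos (gaussianPDFReal_zero_one_pos _) (exp_pos _))
  have curve_comb (x : ℝ) : a * (y x + k₀ * v x) + b * (y x + k₁ * v x) = x := by
    rw [hmk] at hx
    linear_combination hx x + y x * hab
  obtain ⟨int₀, le₀⟩ := integral_deriv_mul_comp_le_mgf (deriv_curve · k₀)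
    (fun x => (curve_deriv_pos hk₀ x).le) hi₀
  obtain ⟨int₁, le₁⟩ := integral_deriv_mul_comp_le_mgf (deriv_curve · k₁)
    (fun x => (curve_deriv_pos hk₁ x).le) hi₁
  have jensen : 1 / m * cgf F γ m ≤ a / k₀ * log (mgf F₀ γ k₀) + b / k₁ * log (mgf F₁ γ k₁) :=
    le_log_add_log_of_integral_le (div_nonneg ha hk₀.le) (div_nonneg hb hk₁.le)
      (fun x => mul_pos (gaussianPDFReal_zero_one_pos x) (exp_pos (m * F x - cgf F γ m)))
      ((integral_gaussianReal_zero_one _).symm.trans (integral_exp_mul_sub_cgf hi).2)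
      (curve_pos hk₀) (curve_pos hk₁) int₀ int₁ (mgf_pos hi₀) (mgf_pos hi₁) le₀ le₁
      fun x => mul_le_log_div_add_log_div hm (hr x) (hs x) ha hb hab hk₀ hk₁ hmk.symm (hx x)
        (hrs x) rfl (density x) ((congrArg F (curve_comb x)).ge.trans (hle _ _))
  calc logNorm F γ m ≤ _ := jensen
    _ = a * logNorm F₀ γ k₀ + b * logNorm F₁ γ k₁ := by
      rw [logNorm, logNorm, cgf, cgf]
      ring

end RealLine

section Tensorization

variable {E G : Type*} [NormedAddCommGroup E] [NormedSpace ℝ E] [MeasurableSpace E]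
  [NormedAddCommGroup G] [NormedSpace ℝ G] [MeasurableSpace G]

/-- The three-function inequality of Prékopa–Leindler type satisfied by log-norms: it is the joint
convexity of `(F, m) ↦ logNorm F μ m`, with the values of `F` allowed to be mixed at different
points. The functions are Lipschitz so that all the integrals involved exist for Gaussian `μ`. -/
def LogNormInequality (μ : Measure E) : Prop :=
  ∀ ⦃F F₀ F₁ : E → ℝ⦄ ⦃L L₀ L₁ : ℝ≥0⦄, ConvexOn ℝ univ F → LipschitzWith L F →
    LipschitzWith L₀ F₀ → LipschitzWith L₁ F₁ → ∀ ⦃a b k₀ k₁ : ℝ⦄, 0 ≤ a → 0 ≤ b → a + b = 1 →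
    0 < k₀ → 0 < k₁ → (∀ x₀ x₁, F (a • x₀ + b • x₁) ≤ a * F₀ x₀ + b * F₁ x₁) →
    logNorm F μ (a * k₀ + b * k₁) ≤ a * logNorm F₀ μ k₀ + b * logNorm F₁ μ k₁

lemma mem_integrableExpSet_of_lipschitzWith [BorelSpace E] [SecondCountableTopology E]
    [CompleteSpace E] (μ : Measure E) [IsGaussian μ] {F : E → ℝ} {L : ℝ≥0}
    (hF : LipschitzWith L F) (m : ℝ) : m ∈ integrableExpSet F μ := by
  obtain ⟨C, hC, hCi⟩ := IsGaussian.exists_integrable_exp_sq μ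
  have young (t : ℝ) : |m| * L * t ≤ (|m| * L) ^ 2 / (4 * C) + C * t ^ 2 := by
    have : (|m| * L) ^ 2 / (4 * C) + C * t ^ 2 - |m| * L * t
        = C * (t - |m| * L / (2 * C)) ^ 2 := by
      field_simp
      ring
    have := mul_nonneg hC.le (sq_nonneg (t - |m| * L / (2 * C)))
    linarith
  have exponent_le (x : E) : m * F x ≤ m * F 0 + (|m| * L) ^ 2 / (4 * C) + C * ‖x‖ ^ 2 := by
    have lipschitz : |F x - F 0| ≤ L * ‖x‖ := by
      simpa only [Real.dist_eq, dist_zero_right] using hF.dist_le_mul x 0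
    calc m * F x = m * F 0 + m * (F x - F 0) := by ring
      _ ≤ m * F 0 + |m * (F x - F 0)| := by
          gcongr
          exact le_abs_self _
      _ ≤ m * F 0 + |m| * (L * ‖x‖) := by
          rw [abs_mul]
          gcongr
      _ ≤ _ := by linarith [young ‖x‖]
  refine (hCi.const_mul (exp (m * F 0 + (|m| * L) ^ 2 / (4 * C)))).mono'
    (by have := hF.continuous; exact Continuous.aestronglyMeasurable (by fun_prop))
    (ae_of_all _ fun x => ?_)
  rw [norm_of_nonneg (exp_nonneg _), ← exp_add]
  exact exp_le_exp.2 (exponent_le x)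

lemma exp_mul_logNorm {Ω : Type*} [MeasurableSpace Ω] {μ : Measure Ω} [IsProbabilityMeasure μ]
    {F : Ω → ℝ} {m : ℝ} (hm : m ≠ 0) (hF : m ∈ integrableExpSet F μ) :
    exp (m * logNorm F μ m) = mgf F μ m := by
  rw [logNorm, ← mul_assoc, mul_one_div_cancel hm, one_mul, exp_cgf hF]

lemma logNorm_le_logNorm_add {Ω : Type*} [MeasurableSpace Ω] {μ : Measure Ω}
    [IsProbabilityMeasure μ] {F H : Ω → ℝ} {m c : ℝ} (hm : 0 < m) (hF : m ∈ integrableExpSet F μ)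
    (hH : m ∈ integrableExpSet H μ) (hFH : ∀ x, F x ≤ H x + c) :
    logNorm F μ m ≤ logNorm H μ m + c := by
  have mgf_le : mgf F μ m ≤ mgf H μ m * exp (m * c) := by
    rw [← mgf_add_const]
    refine integral_mono hF ?_ fun x => exp_le_exp.2 (mul_le_mul_of_nonneg_left (hFH x) hm.le)
    simpa only [mul_add, exp_add] using Integrable.mul_const hH (exp (m * c))
  have exp_le : exp (m * logNorm F μ m) ≤ exp (m * (logNorm H μ m + c)) := by
    rwa [mul_add, exp_add, exp_mul_logNorm hm.ne' hF, exp_mul_logNorm hm.ne' hH]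
  exact le_of_mul_le_mul_left (exp_le_exp.1 exp_le) hm

lemma LogNormInequality.gaussianReal_zero_one : LogNormInequality (gaussianReal 0 1) :=
  fun _ _ _ _ _ _ hF hL hL₀ hL₁ _ _ _ _ ha hb hab hk₀ hk₁ hle =>
    logNorm_gaussianReal_le hF ha hb hab hk₀ hk₁ hle (mem_integrableExpSet_of_lipschitzWith _ hL _)
      (mem_integrableExpSet_of_lipschitzWith _ hL₀ _)
      (mem_integrableExpSet_of_lipschitzWith _ hL₁ _)

lemma LogNormInequality.dirac [MeasurableSingletonClass E] (x : E) :
    LogNormInequality (Measure.dirac x) := by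
  have logNorm_dirac (F : E → ℝ) {m : ℝ} (hm : 0 < m) : logNorm F (Measure.dirac x) m = F x := by
    rw [logNorm, cgf, mgf_dirac', log_exp, one_div, inv_mul_cancel_left₀ hm.ne']
  intro F F₀ F₁ _ _ _ _ _ _ _ a b k₀ k₁ ha hb hab hk₀ hk₁ hle
  have hm : 0 < a * k₀ + b * k₁ := convex_Ioi (0 : ℝ) hk₀ hk₁ ha hb hab
  rw [logNorm_dirac F hm, logNorm_dirac F₀ hk₀, logNorm_dirac F₁ hk₁]
  simpa only [← add_smul, hab, one_smul] using hle x x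

lemma LogNormInequality.map [OpensMeasurableSpace E] [BorelSpace G] {μ : Measure E}
    (hμ : LogNormInequality μ) (A : E →L[ℝ] G) : LogNormInequality (μ.map A) := by
  have logNorm_map {F : G → ℝ} {L : ℝ≥0} (hF : LipschitzWith L F) (m : ℝ) :
      logNorm F (μ.map A) m = logNorm (fun x => F (A x)) μ m := by
    have measurable_exp : Measurable fun y => exp (m * F y) :=
      (hF.continuous.measurable.const_mul m).exp
    rw [logNorm, logNorm, cgf, cgf,
      mgf_map A.continuous.measurable.aemeasurable measurable_exp.aestronglyMeasurable]
    rfl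
  intro F F₀ F₁ L L₀ L₁ hF hL hL₀ hL₁ a b k₀ k₁ ha hb hab hk₀ hk₁ hle
  rw [logNorm_map hL, logNorm_map hL₀, logNorm_map hL₁]
  refine hμ (hF.comp_linearMap A.toLinearMap) (hL.comp A.lipschitz) (hL₀.comp A.lipschitz)
    (hL₁.comp A.lipschitz) ha hb hab hk₀ hk₁ fun x₀ x₁ => ?_
  simpa only [Function.comp_apply, ContinuousLinearMap.coe_coe, map_add, map_smul] using
    hle (A x₀) (A x₁)

section Prod

lemma LogNormInequality.logNorm_slice_le {X : Type*} [NormedAddCommGroup X]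
    [NormedSpace ℝ X] {ν : Measure G} (hν : LogNormInequality ν) {F F₀ F₁ : X × G → ℝ}
    {L L₀ L₁ : ℝ≥0} (hF : ConvexOn ℝ univ F) (hL : LipschitzWith L F) (hL₀ : LipschitzWith L₀ F₀)
    (hL₁ : LipschitzWith L₁ F₁) {a b k₀ k₁ : ℝ} (ha : 0 ≤ a) (hb : 0 ≤ b) (hab : a + b = 1)
    (hk₀ : 0 < k₀) (hk₁ : 0 < k₁) (hle : ∀ p₀ p₁, F (a • p₀ + b • p₁) ≤ a * F₀ p₀ + b * F₁ p₁)
    (x₀ x₁ : X) :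
    logNorm (fun y => F (a • x₀ + b • x₁, y)) ν (a * k₀ + b * k₁)
      ≤ a * logNorm (fun y => F₀ (x₀, y)) ν k₀ + b * logNorm (fun y => F₁ (x₁, y)) ν k₁ := by
  have convex_slice (x : X) : ConvexOn ℝ univ fun y => F (x, y) :=
    ⟨convex_univ, fun y _ z _ a b ha hb hab => by
      simpa only [Prod.smul_mk, Prod.mk_add_mk, ← add_smul, hab, one_smul] using
        hF.2 (mem_univ (x, y)) (mem_univ (x, z)) ha hb hab⟩
  exact hν (convex_slice _) (hL.comp (LipschitzWith.prodMk_left _))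
    (hL₀.comp (LipschitzWith.prodMk_left _))
    (hL₁.comp (LipschitzWith.prodMk_left _)) ha hb hab hk₀ hk₁ fun y₀ y₁ => hle (x₀, y₀) (x₁, y₁)

variable [BorelSpace G] [SecondCountableTopology G] [CompleteSpace G]
  {ν : Measure G} [IsGaussian ν]

lemma lipschitzWith_logNorm_slice {X : Type*} [PseudoMetricSpace X] {F : X × G → ℝ}
    {L : ℝ≥0} (hF : LipschitzWith L F) {m : ℝ} (hm : 0 < m) :
    LipschitzWith L fun x => logNorm (fun y => F (x, y)) ν m := by
  refine LipschitzWith.of_le_add_mul L fun x x' => ?_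
  have integrable (x : X) :=
    mem_integrableExpSet_of_lipschitzWith ν (hF.comp (LipschitzWith.prodMk_left x)) m
  refine logNorm_le_logNorm_add hm (integrable x) (integrable x') fun y => ?_
  simpa only [mul_one] using LipschitzWith.le_add_mul (f := fun x => F (x, y))
    (hF.comp (LipschitzWith.prodMk_right y)) x x'

variable [BorelSpace E] [SecondCountableTopology E] [CompleteSpace E]
  {μ : Measure E} [IsGaussian μ]

lemma logNorm_prod {F : E × G → ℝ} {L : ℝ≥0} (hF : LipschitzWith L F) {m : ℝ} (hm : 0 < m) :
    logNorm F (μ.prod ν) m = logNorm (fun x => logNorm (fun y => F (x, y)) ν m) μ m := by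
  have slice (x : E) : exp (m * logNorm (fun y => F (x, y)) ν m) = ∫ y, exp (m * F (x, y)) ∂ν :=
    exp_mul_logNorm hm.ne'
      (mem_integrableExpSet_of_lipschitzWith ν (hF.comp (LipschitzWith.prodMk_left x)) m)
  have fubini : mgf F (μ.prod ν) m = mgf (fun x => logNorm (fun y => F (x, y)) ν m) μ m := by
    simp only [mgf, slice]
    exact integral_prod _ (mem_integrableExpSet_of_lipschitzWith (μ.prod ν) hF m)
  rw [logNorm, cgf, fubini, logNorm, cgf]

lemma LogNormInequality.prod (hμ : LogNormInequality μ) (hν : LogNormInequality ν) :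
    LogNormInequality (μ.prod ν) := by
  intro F F₀ F₁ L L₀ L₁ hF hL hL₀ hL₁ a b k₀ k₁ ha hb hab hk₀ hk₁ hle
  have hm : 0 < a * k₀ + b * k₁ := convex_Ioi (0 : ℝ) hk₀ hk₁ ha hb hab
  have convex : ConvexOn ℝ univ fun x => logNorm (fun y => F (x, y)) ν (a * k₀ + b * k₁) := by
    refine ⟨convex_univ, fun x _ x' _ a' b' ha' hb' hab' => ?_⟩
    simpa only [← add_mul, hab', one_mul, smul_eq_mul] using
      hν.logNorm_slice_le hF hL hL hL ha' hb' hab' hm hm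
        (fun p₀ p₁ => hF.2 (mem_univ p₀) (mem_univ p₁) ha' hb' hab') x x'
  rw [logNorm_prod hL hm, logNorm_prod hL₀ hk₀, logNorm_prod hL₁ hk₁]
  exact hμ convex (lipschitzWith_logNorm_slice hL hm) (lipschitzWith_logNorm_slice hL₀ hk₀)
    (lipschitzWith_logNorm_slice hL₁ hk₁) ha hb hab hk₀ hk₁
    (hν.logNorm_slice_le hF hL hL₀ hL₁ ha hb hab hk₀ hk₁ hle)

end Prod

lemma pi_succ_eq_map_prod {n : ℕ} (μ : Measure ℝ) [SigmaFinite μ] :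
    (Measure.pi fun _ : Fin (n + 1) => μ)
      = (μ.prod (Measure.pi fun _ : Fin n => μ)).map (Fin.consEquivL ℝ fun _ => ℝ) := by
  have cons_eq : ⇑(Fin.consEquivL ℝ fun _ : Fin (n + 1) => ℝ)
      = (MeasurableEquiv.piFinSuccAbove (fun _ => ℝ) 0).symm := by
    funext p
    exact (Fin.insertNth_zero' p.1 p.2).symm
  rw [cons_eq]
  exact (measurePreserving_piFinSuccAbove (fun _ => μ) 0).symm.map_eq.symm

lemma isGaussian_pi_gaussianReal :
    ∀ n : ℕ, IsGaussian (Measure.pi fun _ : Fin n => gaussianReal 0 1)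
  | 0 => by
    rw [Measure.pi_of_empty]
    infer_instance
  | n + 1 => by
    have := isGaussian_pi_gaussianReal n
    rw [pi_succ_eq_map_prod]
    infer_instance

lemma LogNormInequality.pi_gaussianReal :
    ∀ n : ℕ, LogNormInequality (Measure.pi fun _ : Fin n => gaussianReal 0 1)
  | 0 => by
    rw [Measure.pi_of_empty]
    exact .dirac _
  | n + 1 => by
    have := isGaussian_pi_gaussianReal n
    rw [pi_succ_eq_map_prod]
    exact (gaussianReal_zero_one.prod (pi_gaussianReal n)).map
      (Fin.consEquivL ℝ fun _ => ℝ).toContinuousLinearMap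

end Tensorization

section Limits

variable {E : Type*} [NormedAddCommGroup E] [NormedSpace ℝ E]

lemma exists_seq_convex_lipschitz_tendsto [SecondCountableTopology E] {F : E → ℝ}
    (hF : ConvexOn ℝ univ F) (hlsc : LowerSemicontinuous F) :
    ∃ f : ℕ → E → ℝ, (∀ k, ConvexOn ℝ univ (f k)) ∧ (∀ k, ∃ L : ℝ≥0, LipschitzWith L (f k)) ∧
      (∀ k, f k ≤ F) ∧ ∀ x, Tendsto (fun k => f k x) atTop (𝓝 (F x)) := by
  obtain ⟨l, c, affine_le, iSup_eq⟩ := hF.real_univ_sSup_of_nat_affine_eq hlsc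
  set g : ℕ → E → ℝ := fun i => ⇑(l i) + Function.const E (c i)
  have convex_affine (i : ℕ) : ConvexOn ℝ univ (g i) :=
    ((l i).toLinearMap.convexOn convex_univ).add (convexOn_const (c i) convex_univ)
  have lipschitz_affine (i : ℕ) : LipschitzWith (‖l i‖₊ + 0) (g i) :=
    (l i).lipschitz.add (LipschitzWith.const (c i))
  refine ⟨partialSups g, fun k => ?_, fun k => ?_,
    fun k => partialSups_le g k F fun i _ => affine_le i, fun x => ?_⟩
  · induction k with
    | zero => simpa only [partialSups_zero] using convex_affine 0
    | succ k ih => simpa only [partialSups_add_one] using ih.sup (convex_affine (k + 1))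
  · induction k with
    | zero => exact ⟨_, by rw [partialSups_zero]; exact lipschitz_affine 0⟩
    | succ k ih =>
      obtain ⟨L, hL⟩ := ih
      exact ⟨_, by rw [partialSups_add_one]; exact hL.max (lipschitz_affine (k + 1))⟩
  · have bddAbove : BddAbove (range fun i => g i x) :=
      ⟨F x, forall_mem_range.2 fun i => affine_le i x⟩
    have iSup_partialSups : ⨆ k, partialSups (fun i => g i x) k = F x := by
      rw [ciSup_partialSups_eq bddAbove, ← iSup_eq, iSup_apply]
    simp only [Pi.partialSups_apply]
    rw [← iSup_partialSups]
    exact tendsto_atTop_ciSup (partialSups _).monotone (bddAbove_range_partialSups.2 bddAbove)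

lemma tendsto_logNorm {Ω : Type*} [MeasurableSpace Ω] {μ : Measure Ω} [NeZero μ]
    {f : ℕ → Ω → ℝ} {F : Ω → ℝ} (hf : ∀ k, Measurable (f k)) (hle : ∀ k, f k ≤ F)
    (hlim : ∀ x, Tendsto (fun k => f k x) atTop (𝓝 (F x))) {m : ℝ} (hm : 0 ≤ m)
    (hF : m ∈ integrableExpSet F μ) :
    Tendsto (fun k => logNorm (f k) μ m) atTop (𝓝 (logNorm F μ m)) := by
  have tendsto_mgf : Tendsto (fun k => mgf (f k) μ m) atTop (𝓝 (mgf F μ m)) := by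
    refine tendsto_integral_of_dominated_convergence _
      (fun k => ((hf k).const_mul m).exp.aestronglyMeasurable) hF
      (fun k => ae_of_all _ fun x => ?_)
      (ae_of_all _ fun x => (continuous_exp.tendsto _).comp ((hlim x).const_mul m))
    rw [norm_of_nonneg (exp_nonneg _)]
    exact exp_le_exp.2 (mul_le_mul_of_nonneg_left (hle k x) hm)
  exact (tendsto_mgf.log (mgf_pos' (NeZero.ne μ) hF).ne').const_mul _

lemma LogNormInequality.convexOn_logNorm [SecondCountableTopology E] [MeasurableSpace E]
    [BorelSpace E] {μ : Measure E} [NeZero μ] (hμ : LogNormInequality μ) {F : E → ℝ}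
    (hF : ConvexOn ℝ univ F) (hlsc : LowerSemicontinuous F) :
    ConvexOn ℝ (Ioi 0 ∩ integrableExpSet F μ) (logNorm F μ) := by
  obtain ⟨f, convex, lipschitz, f_le, tendsto_f⟩ := exists_seq_convex_lipschitz_tendsto hF hlsc
  choose L lipschitz using lipschitz
  have convex_domain : Convex ℝ (Ioi 0 ∩ integrableExpSet F μ) :=
    (convex_Ioi 0).inter convex_integrableExpSet
  have tendsto {m : ℝ} (hm : m ∈ Ioi 0 ∩ integrableExpSet F μ) :=
    tendsto_logNorm (fun k => (lipschitz k).continuous.measurable) f_le tendsto_f hm.1.le hm.2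
  refine ⟨convex_domain, fun k₀ hk₀ k₁ hk₁ a b ha hb hab => ?_⟩
  refine le_of_tendsto_of_tendsto' (tendsto (convex_domain hk₀ hk₁ ha hb hab))
    (((tendsto hk₀).const_mul a).add ((tendsto hk₁).const_mul b)) fun k => ?_
  exact hμ (convex k) (lipschitz k) (lipschitz k) (lipschitz k) ha hb hab hk₀.1 hk₁.1
    fun x₀ x₁ => (convex k).2 (mem_univ x₀) (mem_univ x₁) ha hb hab

end Limits

lemma monotoneOn_Ici_of_convexOn_of_even {Φ : ℝ → ℝ} (hΦ : ConvexOn ℝ univ Φ)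
    (heven : Function.Even Φ) : MonotoneOn Φ (Ici 0) := by
  intro x (hx : 0 ≤ x) y _ hxy
  have le_max : Φ x ≤ max (Φ (-y)) (Φ y) :=
    hΦ.le_max_of_mem_Icc (mem_univ _) (mem_univ _) ⟨by linarith, hxy⟩
  rwa [heven, max_self] at le_max

lemma convexOn_comp_norm_add {E : Type*} [SeminormedAddCommGroup E] [NormedSpace ℝ E] {Φ : ℝ → ℝ}
    (hΦ : ConvexOn ℝ univ Φ) (heven : Function.Even Φ) (h : E) :
    ConvexOn ℝ univ fun z => Φ ‖h + z‖ := by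
  have convex_norm : ConvexOn ℝ univ fun z => ‖h + z‖ := convexOn_univ_norm.translate_right h
  have convex_range : Convex ℝ ((fun z => ‖h + z‖) '' univ) :=
    (isPreconnected_univ.image _ (by fun_prop)).ordConnected.convex
  have range_subset : (fun z => ‖h + z‖) '' univ ⊆ Ici 0 :=
    image_subset_iff.2 fun z _ => norm_nonneg (h + z)
  exact (hΦ.subset (subset_univ _) convex_range).comp convex_norm
    ((monotoneOn_Ici_of_convexOn_of_even hΦ heven).mono range_subset)

lemma convexOn_comp_sqrt_sum_add_sq {ι : Type*} [Fintype ι] {Φ : ℝ → ℝ}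
    (hΦ : ConvexOn ℝ univ Φ) (heven : Function.Even Φ) (h : ι → ℝ) :
    ConvexOn ℝ univ fun z : ι → ℝ => Φ (√(∑ i, (h i + z i) ^ 2)) := by
  have convex_norm := (convexOn_comp_norm_add hΦ heven (WithLp.toLp 2 h)).comp_linearMap
    (WithLp.linearEquiv 2 ℝ (ι → ℝ)).symm.toLinearMap
  refine convex_norm.congr fun z _ => ?_
  simp [EuclideanSpace.norm_eq]

end GaussianLogNorm

open GaussianLogNorm in
theorem parisi_one_level_convex_multidim_general {n : ℕ} {F : (Fin n → ℝ) → ℝ}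
    (hF : ConvexOn ℝ Set.univ F) :
    ConvexOn ℝ
      (Set.Ioi 0 ∩ integrableExpSet F (Measure.pi fun _ : Fin n => gaussianReal 0 1))
      (logNorm F (Measure.pi fun _ : Fin n => gaussianReal 0 1)) :=
  (LogNormInequality.pi_gaussianReal n).convexOn_logNorm hF
    (continuousOn_univ.1 (hF.continuousOn isOpen_univ)).lowerSemicontinuous

/-- Corollary 2: for `η = Φ(|h⃗ + z⃗|)` with `z⃗` an
`n`-dimensional standard Gaussian vector, `m ↦ (1/m) log E[exp (m η)]` is
convex on `(0, ∞)`. -/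
theorem parisi_one_level_convex_multidim
    (n : ℕ) (Φ : ℝ → ℝ) (hΦsmooth : ContDiff ℝ (⊤ : ℕ∞) Φ)
    (hΦconv : ConvexOn ℝ Set.univ Φ)
    (hΦsymm : ∀ x, Φ (-x) = Φ x) (hΦ0 : Φ 0 = 0)
    (h : Fin n → ℝ)
    (hint : ∀ m : ℝ, 0 < m →
      Integrable
        (fun z : Fin n → ℝ =>
          Real.exp (m * Φ (Real.sqrt (∑ i, (h i + z i) ^ 2))))
        (Measure.pi fun _ : Fin n => gaussianReal 0 1)) :
    ConvexOn ℝ (Set.Ioi (0 : ℝ))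
      (fun m => (1 / m) *
        Real.log (∫ z : Fin n → ℝ,
          Real.exp (m * Φ (Real.sqrt (∑ i, (h i + z i) ^ 2)))
            ∂(Measure.pi fun _ : Fin n => gaussianReal 0 1))) := by
  exact (parisi_one_level_convex_multidim_general
    (GaussianLogNorm.convexOn_comp_sqrt_sum_add_sq hΦconv hΦsymm h)).subset
    (fun m hm => ⟨hm, hint m hm⟩) (convex_Ioi 0)
end
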